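/- arXiv:1706.07175 — 7 statements merged into one kernel-verified Lean document; each statement's English description precedes it below -/
import Mathlib

section
/- Let q be a norm on ℙ(ℂ^N) that is spectral admissible with respect to a spectral, submultiplicative norm q_σ. Then the limit lim_{k→∞} m_k(q)/k exists and equals m(q_σ); in particular the asymptotic exponent satisfies m*(q) = m(q_σ), and m(q_σ) ≤ m(q). -/
open MvPolynomial Filter
open scoped ENNReal

/-- The partial-derivative operator `D^α = ∂^{|α|}/∂x₁^{α₁}⋯∂x_N^{α_N}` on
polynomials in `N` variables. -/
noncomputable def mvDeriv {N : ℕ} (α : Fin N → ℕ) (P : MvPolynomial (Fin N) ℂ) :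
    MvPolynomial (Fin N) ℂ :=
  (List.ofFn fun j : Fin N =>
      (fun Q : MvPolynomial (Fin N) ℂ => MvPolynomial.pderiv j Q)^[α j]).foldl
    (fun Q f => f Q) P

/-- `q` is a norm on the complex vector space `ℙ(ℂ^N)` of polynomials. -/
structure IsPolyNorm {N : ℕ} (q : MvPolynomial (Fin N) ℂ → ℝ) : Prop where
  nonneg : ∀ P, 0 ≤ q P
  definite : ∀ P, q P = 0 → P = 0
  triangle : ∀ P Q, q (P + Q) ≤ q P + q Q
  homog : ∀ (c : ℂ) (P), q (c • P) = ‖c‖ * q P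

/-- The Markov exponent `m(α, q) ∈ [0,∞]`: the infimum of the set of `s > 0` such that
`q(D^α P) ≤ M (deg P)^s q(P)` holds for some `M > 0` and all `P` with `deg P ≥ 1`
(`sInf ∅ = ∞` in `ℝ≥0∞`). -/
noncomputable def mExp {N : ℕ} (q : MvPolynomial (Fin N) ℂ → ℝ) (α : Fin N → ℕ) : ℝ≥0∞ :=
  sInf (ENNReal.ofReal '' {s : ℝ | 0 < s ∧ ∃ M : ℝ, 0 < M ∧
    ∀ P : MvPolynomial (Fin N) ℂ, 1 ≤ P.totalDegree →
      q (mvDeriv α P) ≤ M * (P.totalDegree : ℝ) ^ s * q P})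

/-- `m_k(q) = max {m(α,q) : |α| = k}`. -/
noncomputable def mkExp {N : ℕ} (q : MvPolynomial (Fin N) ℂ → ℝ) (k : ℕ) : ℝ≥0∞ :=
  ⨆ α ∈ {α : Fin N → ℕ | ∑ j, α j = k}, mExp q α

/-- The asymptotic Markov exponent `m*(q) = limsup_k m_k(q)/k`. -/
noncomputable def mStar {N : ℕ} (q : MvPolynomial (Fin N) ℂ → ℝ) : ℝ≥0∞ :=
  Filter.atTop.limsup fun k : ℕ => mkExp q k / (k : ℝ≥0∞)

theorem aux_deg {N : ℕ} (j : Fin N) (P : MvPolynomial (Fin N) ℂ) :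
    (pderiv j P).totalDegree ≤ P.totalDegree := by
  classical
  refine Finset.sup_le fun m hm => ?_
  have h1 : m + Finsupp.single j 1 ∈ P.support := by
    rw [mem_support_iff] at hm ⊢
    rw [coeff_pderiv] at hm
    exact left_ne_zero_of_mul hm
  have h2 := le_totalDegree h1
  have h3 : (m + Finsupp.single j 1).sum (fun _ e => e) = m.sum (fun _ e => e) + 1 := by
    rw [Finsupp.sum_add_index' (by simp) (by simp)]
    simp
  omega

theorem aux_pderiv_zero {N : ℕ} (j : Fin N) (P : MvPolynomial (Fin N) ℂ)
    (h : P.totalDegree = 0) : pderiv j P = 0 := by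
  rw [totalDegree_eq_zero_iff_eq_C.mp h, pderiv_C]

/-- iterated derivatives along a list -/
noncomputable def lD {N : ℕ} (l : List (Fin N)) (P : MvPolynomial (Fin N) ℂ) :
    MvPolynomial (Fin N) ℂ := l.foldl (fun Q j => pderiv j Q) P

theorem lD_append {N : ℕ} (l : List (Fin N)) (j : Fin N) (P : MvPolynomial (Fin N) ℂ) :
    lD (l ++ [j]) P = pderiv j (lD l P) := by simp [lD]

theorem lD_deg {N : ℕ} (l : List (Fin N)) (P : MvPolynomial (Fin N) ℂ) :
    (lD l P).totalDegree ≤ P.totalDegree := by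
  induction l using List.reverseRecOn with
  | nil => simp [lD]
  | append_singleton l j ih => rw [lD_append]; exact (aux_deg _ _).trans ih

theorem lD_replicate {N : ℕ} (k : ℕ) (j : Fin N) (P : MvPolynomial (Fin N) ℂ) :
    lD (List.replicate k j) P = (pderiv j)^[k] P := by
  induction k generalizing P with
  | zero => simp [lD]
  | succ k ih =>
    rw [Function.iterate_succ_apply, ← ih]
    simp [lD, List.replicate_succ]

theorem mvDeriv_eq {N : ℕ} (α : Fin N → ℕ) : ∃ l : List (Fin N), l.length = ∑ j, α j ∧
    (∀ i ∈ l, α i ≠ 0) ∧ ∀ P, mvDeriv α P = lD l P := by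
  refine ⟨(List.ofFn fun j => List.replicate (α j) j).flatten, ?_, ?_, ?_⟩
  · simp [List.length_flatten, List.map_ofFn, List.sum_ofFn, Function.comp_def]
  · intro i hi
    simp only [List.mem_flatten, List.mem_ofFn] at hi
    obtain ⟨l, ⟨j, rfl⟩, h⟩ := hi
    rw [List.mem_replicate] at h
    rw [h.2]; exact h.1
  · intro P
    rw [lD, List.foldl_flatten, mvDeriv]
    have : (List.ofFn fun j : Fin N =>
      (fun Q : MvPolynomial (Fin N) ℂ => MvPolynomial.pderiv j Q)^[α j]) =
      (List.ofFn fun j => List.replicate (α j) j).map (fun l => lD l) := by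
      rw [List.map_ofFn]
      congr 1
      funext j P
      simp only [Function.comp]
      rw [lD_replicate]
    rw [this, List.foldl_map]
    rfl

theorem mvDeriv_single {N : ℕ} (j : Fin N) (k : ℕ) (P : MvPolynomial (Fin N) ℂ) :
    mvDeriv (Pi.single j k) P = (pderiv j)^[k] P := by
  obtain ⟨l, h1, h2, h3⟩ := mvDeriv_eq (Pi.single j k : Fin N → ℕ)
  rw [h3, ← lD_replicate]
  congr 1
  rw [List.eq_replicate_iff]
  refine ⟨by simpa using h1, fun i hi => ?_⟩
  by_contra hne
  exact h2 i hi (by simp [hne])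

theorem aux_sum_one {N : ℕ} (α : Fin N → ℕ) (h : ∑ j, α j = 1) : ∃ j, α = Pi.single j 1 := by
  classical
  have : ∃ j, α j ≠ 0 := by
    by_contra! hc
    simp [hc] at h
  obtain ⟨j, hj⟩ := this
  have h2 := Finset.add_sum_erase Finset.univ α (Finset.mem_univ j)
  refine ⟨j, funext fun i => ?_⟩
  by_cases hi : i = j
  · subst hi; simp; omega
  · simp [hi]
    have := Finset.single_le_sum (f := α) (fun _ _ => Nat.zero_le _)
      (Finset.mem_erase.mpr ⟨hi, Finset.mem_univ i⟩)
    omega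

/-- the alternating sum -/
noncomputable def TT {N : ℕ} (j : Fin N) (P : MvPolynomial (Fin N) ℂ) (k n : ℕ) :
    MvPolynomial (Fin N) ℂ :=
  ∑ i ∈ Finset.range (k + 1), (k.choose i : MvPolynomial (Fin N) ℂ) *
    ((-P) ^ (k - i) * (pderiv j)^[n] (P ^ i))

theorem TT_rec {N : ℕ} (j : Fin N) (P : MvPolynomial (Fin N) ℂ) (k n : ℕ) :
    TT j P (k+1) (n+1) = pderiv j (TT j P (k+1) n) + (k+1) * pderiv j P * TT j P k n := by
  have e : (k+1) * pderiv j P * TT j P k n =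
      ∑ i ∈ Finset.range (k + 1 + 1), ((k+1).choose i : MvPolynomial (Fin N) ℂ) *
        (((k + 1 - i : ℕ) : MvPolynomial (Fin N) ℂ) * ((-P) ^ (k + 1 - i - 1) * pderiv j P *
          (pderiv j)^[n] (P ^ i))) := by
    rw [Finset.sum_range_succ, TT, Finset.mul_sum]
    simp only [Nat.sub_self, Nat.cast_zero, zero_mul, mul_zero, add_zero]
    refine Finset.sum_congr rfl fun i hi => ?_
    have h := Nat.choose_mul_succ_eq k i
    have h' : (k.choose i : MvPolynomial (Fin N) ℂ) * (k + 1) =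
      (k+1).choose i * ((k + 1 - i : ℕ) : MvPolynomial (Fin N) ℂ) := by exact_mod_cast h
    rw [show k + 1 - i - 1 = k - i by omega]
    linear_combination ((-P) ^ (k - i) * pderiv j P * (pderiv j)^[n] (P ^ i)) * h'
  rw [e, TT, TT, map_sum, ← Finset.sum_add_distrib]
  refine Finset.sum_congr rfl fun i hi => ?_
  rw [pderiv_mul, pderiv_mul, pderiv_pow, Function.iterate_succ_apply', map_neg,
    show ((k+1).choose i : MvPolynomial (Fin N) ℂ) = C ((k+1).choose i : ℂ) by simp, pderiv_C]
  ring

theorem TT_lt {N : ℕ} (j : Fin N) (P : MvPolynomial (Fin N) ℂ) (n : ℕ) :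
    ∀ k, n < k → TT j P k n = 0 := by
  induction n with
  | zero =>
    intro k hk
    have := add_pow P (-P) k
    rw [add_neg_cancel, zero_pow (by omega)] at this
    rw [TT, this]
    exact Finset.sum_congr rfl fun i _ => by simp only [Function.iterate_zero, id]; ring
  | succ n ih =>
    intro k hk
    obtain ⟨k, rfl⟩ : ∃ m, k = m + 1 := ⟨k - 1, by omega⟩
    rw [TT_rec, ih _ (by omega), ih _ (by omega)]
    simp

theorem TT_eq {N : ℕ} (j : Fin N) (P : MvPolynomial (Fin N) ℂ) (k : ℕ) :
    TT j P k k = (k.factorial : MvPolynomial (Fin N) ℂ) * (pderiv j P) ^ k := by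
  induction k with
  | zero => simp [TT]
  | succ k ih =>
    rw [TT_rec, TT_lt _ _ _ _ (by omega), ih, Nat.factorial_succ]
    push_cast
    rw [map_zero]
    ring

theorem norm_zero' {N : ℕ} {q : MvPolynomial (Fin N) ℂ → ℝ} (hq : IsPolyNorm q) : q 0 = 0 := by
  have := hq.homog 0 0
  simpa using this

theorem norm_neg' {N : ℕ} {q : MvPolynomial (Fin N) ℂ → ℝ} (hq : IsPolyNorm q)
    (P : MvPolynomial (Fin N) ℂ) : q (-P) = q P := by
  have := hq.homog (-1) P
  simpa using this

theorem norm_natmul {N : ℕ} {q : MvPolynomial (Fin N) ℂ → ℝ} (hq : IsPolyNorm q)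
    (m : ℕ) (P : MvPolynomial (Fin N) ℂ) : q ((m : MvPolynomial (Fin N) ℂ) * P) = m * q P := by
  have := hq.homog (m : ℂ) P
  rw [smul_eq_C_mul] at this
  simpa using this

theorem norm_sum' {N : ℕ} {q : MvPolynomial (Fin N) ℂ → ℝ} (hq : IsPolyNorm q)
    (s : Finset ℕ) (f : ℕ → MvPolynomial (Fin N) ℂ) : q (∑ i ∈ s, f i) ≤ ∑ i ∈ s, q (f i) :=
  Finset.le_sum_of_subadditive q (norm_zero' hq).le hq.triangle s f

def Adm {N : ℕ} (p q : MvPolynomial (Fin N) ℂ → ℝ) (A a : ℝ) : Prop :=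
  ∀ (P : MvPolynomial (Fin N) ℂ) (n : ℕ), 1 ≤ n → P.totalDegree ≤ n → p P ≤ A * (n : ℝ) ^ a * q P

theorem aux_adm {N : ℕ} {p q : MvPolynomial (Fin N) ℂ → ℝ} (hp : IsPolyNorm p)
    (hq : IsPolyNorm q) (A a : ℝ) (hA : 0 < A) (ha : 0 ≤ a)
    (h : ∀ P : MvPolynomial (Fin N) ℂ, 1 ≤ P.totalDegree →
      p P ≤ A * (P.totalDegree : ℝ) ^ a * q P) : ∃ A', 0 < A' ∧ Adm p q A' a := by
  have h1 : 0 < q 1 := lt_of_le_of_ne (hq.nonneg 1) (fun h => one_ne_zero (hq.definite 1 h.symm))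
  refine ⟨max A (p 1 / q 1), lt_max_of_lt_left hA, fun P n hn hP => ?_⟩
  have hn' : (1 : ℝ) ≤ n := by exact_mod_cast hn
  have hqP := hq.nonneg P
  rcases Nat.eq_zero_or_pos P.totalDegree with h0 | h0
  · have e := totalDegree_eq_zero_iff_eq_C.mp h0
    set c := coeff 0 P
    have e2 : P = c • (1 : MvPolynomial (Fin N) ℂ) := by rw [smul_eq_C_mul, mul_one]; exact e
    have e3 : p P = ‖c‖ * p 1 := by rw [e2, hp.homog]
    have e4 : q P = ‖c‖ * q 1 := by rw [e2, hq.homog]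
    have : p P = (p 1 / q 1) * 1 * q P := by rw [e3, e4]; field_simp
    rw [this]
    have h3 : 1 ≤ (n : ℝ) ^ a := Real.one_le_rpow hn' ha
    have h4 : p 1 / q 1 ≤ max A (p 1 / q 1) := le_max_right _ _
    have h5 : 0 ≤ max A (p 1 / q 1) := hA.le.trans (le_max_left _ _)
    gcongr
  · refine (h P h0).trans ?_
    have h4 : A ≤ max A (p 1 / q 1) := le_max_left _ _
    gcongr

def Cond {N : ℕ} (q : MvPolynomial (Fin N) ℂ → ℝ)
    (F : MvPolynomial (Fin N) ℂ → MvPolynomial (Fin N) ℂ) (s : ℝ) : Prop :=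
  ∃ M : ℝ, 0 < M ∧ ∀ (P : MvPolynomial (Fin N) ℂ) (n : ℕ), 1 ≤ n → P.totalDegree ≤ n →
    q (F P) ≤ M * (n : ℝ) ^ s * q P

theorem mExp_le {N : ℕ} {q : MvPolynomial (Fin N) ℂ → ℝ} {α : Fin N → ℕ} {s : ℝ} (hs : 0 < s)
    (h : Cond q (mvDeriv α) s) : mExp q α ≤ ENNReal.ofReal s := by
  obtain ⟨M, hM, h⟩ := h
  exact sInf_le ⟨s, ⟨hs, M, hM, fun P hP => h P _ hP le_rfl⟩, rfl⟩

theorem mvDeriv_const {N : ℕ} {α : Fin N → ℕ} (hα : 1 ≤ ∑ j, α j) (P : MvPolynomial (Fin N) ℂ)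
    (h : P.totalDegree = 0) : mvDeriv α P = 0 := by
  obtain ⟨l, h1, -, h3⟩ := mvDeriv_eq α
  rw [h3]
  rw [← h1] at hα
  induction l using List.reverseRecOn with
  | nil => simp at hα
  | append_singleton l j _ =>
    rw [lD_append]
    apply aux_pderiv_zero
    have := lD_deg l P
    omega

theorem cond_of {N : ℕ} {q : MvPolynomial (Fin N) ℂ → ℝ} (hq : IsPolyNorm q) {α : Fin N → ℕ}
    (hα : 1 ≤ ∑ j, α j) {s : ℝ} (hs : 0 < s) {M : ℝ} (hM : 0 < M)
    (h : ∀ P : MvPolynomial (Fin N) ℂ, 1 ≤ P.totalDegree →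
      q (mvDeriv α P) ≤ M * (P.totalDegree : ℝ) ^ s * q P) : Cond q (mvDeriv α) s := by
  refine ⟨M, hM, fun P n hn hP => ?_⟩
  have hqP := hq.nonneg P
  rcases Nat.eq_zero_or_pos P.totalDegree with h0 | h0
  · rw [mvDeriv_const hα P h0, norm_zero' hq]; positivity
  · refine (h P h0).trans ?_
    gcongr

theorem cond_mono {N : ℕ} {q : MvPolynomial (Fin N) ℂ → ℝ} (hq : IsPolyNorm q)
    {F : MvPolynomial (Fin N) ℂ → MvPolynomial (Fin N) ℂ} {s t : ℝ} (hst : s ≤ t)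
    (h : Cond q F s) : Cond q F t := by
  obtain ⟨M, hM, h⟩ := h
  refine ⟨M, hM, fun P n hn hP => (h P n hn hP).trans ?_⟩
  have hqP := hq.nonneg P
  have hn' : (1 : ℝ) ≤ n := by exact_mod_cast hn
  gcongr

theorem cond_of_lt {N : ℕ} {q : MvPolynomial (Fin N) ℂ → ℝ} (hq : IsPolyNorm q) {α : Fin N → ℕ}
    (hα : 1 ≤ ∑ j, α j) {s : ℝ} (h : mExp q α < ENNReal.ofReal s) : Cond q (mvDeriv α) s := by
  rw [mExp, sInf_lt_iff] at h
  obtain ⟨_, ⟨t, ⟨ht, M, hM, hh⟩, rfl⟩, h2⟩ := h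
  exact cond_mono hq ((ENNReal.ofReal_lt_ofReal_iff_of_nonneg ht.le).mp h2).le
    (cond_of hq hα ht hM hh)

theorem cond_list {N : ℕ} {q : MvPolynomial (Fin N) ℂ → ℝ} (hq : IsPolyNorm q) {s : ℝ}
    (h : ∀ j : Fin N, Cond q (fun P => pderiv j P) s) (l : List (Fin N)) :
    Cond q (lD l) (l.length * s) := by
  induction l using List.reverseRecOn with
  | nil => exact ⟨1, one_pos, fun P n _ _ => by simp [lD]⟩
  | append_singleton l j ih =>
    obtain ⟨M, hM, h1⟩ := h j
    obtain ⟨K, hK, h2⟩ := ih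
    refine ⟨M * K, by positivity, fun P n hn hP => ?_⟩
    have hn' : (0 : ℝ) < n := by exact_mod_cast hn
    rw [lD_append]
    refine (h1 _ n hn ((lD_deg l P).trans hP)).trans ?_
    have := h2 P n hn hP
    calc M * (n : ℝ) ^ s * q (lD l P) ≤ M * (n : ℝ) ^ s * (K * (n : ℝ) ^ (l.length * s) * q P) := by
          gcongr
      _ = M * K * ((n : ℝ) ^ s * (n : ℝ) ^ (l.length * s)) * q P := by ring
      _ = _ := by
        rw [← Real.rpow_add hn']
        congr 3
        simp
        ring

theorem cond_transfer {N : ℕ} {p q : MvPolynomial (Fin N) ℂ → ℝ} {A B a b s : ℝ}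
    (hA : 0 < A) (hB : 0 < B) (hup : Adm p q A a) (hdown : Adm q p B b) (l : List (Fin N))
    (h : Cond p (lD l) s) : Cond q (lD l) (s + (a + b)) := by
  obtain ⟨M, hM, h⟩ := h
  refine ⟨B * M * A, by positivity, fun P n hn hP => ?_⟩
  have hn' : (0 : ℝ) < n := by exact_mod_cast hn
  calc q (lD l P) ≤ B * (n : ℝ) ^ b * p (lD l P) := hdown _ n hn ((lD_deg l P).trans hP)
    _ ≤ B * (n : ℝ) ^ b * (M * (n : ℝ) ^ s * p P) := by gcongr; exact h P n hn hP
    _ ≤ B * (n : ℝ) ^ b * (M * (n : ℝ) ^ s * (A * (n : ℝ) ^ a * q P)) := by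
      gcongr; exact hup P n hn hP
    _ = _ := by rw [Real.rpow_add hn', Real.rpow_add hn']; ring

theorem upper {N : ℕ} {p q : MvPolynomial (Fin N) ℂ → ℝ} (hp : IsPolyNorm p) {A B a b : ℝ}
    (hA : 0 < A) (hB : 0 < B) (ha : 0 ≤ a) (hb : 0 ≤ b)
    (hup : Adm p q A a) (hdown : Adm q p B b) (k : ℕ) (hk : 1 ≤ k) :
    mkExp q k ≤ k * mkExp p 1 + ENNReal.ofReal (a + b) := by
  have hk' : (0 : ℝ) < k := by exact_mod_cast hk
  by_cases htop : mkExp p 1 = ⊤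
  · rw [htop, ENNReal.mul_top (by simp; omega)]; simp
  apply ENNReal.le_of_forall_pos_le_add
  intro ε hε _
  have hε' : (0 : ℝ) < ε := hε
  refine iSup₂_le fun α hα => ?_
  set m := (mkExp p 1).toReal with hm
  have hm0 : 0 ≤ m := ENNReal.toReal_nonneg
  have hmm : mkExp p 1 = ENNReal.ofReal m := (ENNReal.ofReal_toReal htop).symm
  obtain ⟨l, h1, -, h3⟩ := mvDeriv_eq α
  have hc : ∀ j : Fin N, Cond p (fun P => pderiv j P) (m + ε / k) := by
    intro j
    have : mExp p (Pi.single j 1) < ENNReal.ofReal (m + ε / k) := by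
      have h4 : mExp p (Pi.single j 1) ≤ mkExp p 1 :=
        le_iSup₂_of_le (f := fun α (_ : α ∈ {α : Fin N → ℕ | ∑ j, α j = 1}) => mExp p α)
          (Pi.single j 1) (by simp) le_rfl
      refine h4.trans_lt ?_
      rw [hmm]
      have : 0 < (ε : ℝ) / k := by positivity
      exact (ENNReal.ofReal_lt_ofReal_iff (by positivity)).mpr (by linarith)
    have h5 := cond_of_lt hp (by simp) this
    have e : mvDeriv (Pi.single j 1) = fun P => pderiv j P := by
      funext P; rw [mvDeriv_single]; rfl
    rwa [e] at h5
  have hl := cond_transfer hA hB hup hdown l (cond_list hp hc l)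
  rw [← (funext h3 : mvDeriv α = lD l), h1, (show ∑ j, α j = k from hα)] at hl
  refine (mExp_le ?_ hl).trans ?_
  · positivity
  · rw [hmm, ← ENNReal.ofReal_natCast k, ← ENNReal.ofReal_mul hk'.le,
      ← ENNReal.ofReal_add (by positivity) (by positivity), ← ENNReal.ofReal_coe_nnreal,
      ← ENNReal.ofReal_add (by positivity) (by positivity)]
    apply ENNReal.ofReal_le_ofReal
    field_simp
    linarith

theorem lower_cond {N : ℕ} {p q : MvPolynomial (Fin N) ℂ → ℝ} (hp : IsPolyNorm p)
    (hspec : ∀ (P : MvPolynomial (Fin N) ℂ) (n : ℕ), 1 ≤ n → p (P ^ n) = p P ^ n)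
    (hsub : ∀ P Q : MvPolynomial (Fin N) ℂ, p (P * Q) ≤ p P * p Q)
    {A B a b s : ℝ} (hA : 0 < A) (hB : 0 < B)
    (hup : Adm p q A a) (hdown : Adm q p B b) (k : ℕ) (hk : 1 ≤ k) (j : Fin N)
    (h : Cond q (lD (List.replicate k j)) s) :
    Cond p (fun P => pderiv j P) ((s + (b + a)) / k) := by
  have hk' : (0 : ℝ) < k := by exact_mod_cast hk
  have hp1 : p 1 = 1 := by
    have h2 := hspec 1 2 (by norm_num)
    have h1 : p 1 ≠ 0 := fun h => one_ne_zero (hp.definite 1 h)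
    rw [one_pow] at h2
    have : p 1 * (p 1 - 1) = 0 := by linarith [h2]
    rcases mul_eq_zero.mp this with h | h
    · exact absurd h h1
    · linarith
  have hspec' : ∀ (P : MvPolynomial (Fin N) ℂ) (n : ℕ), p (P ^ n) = p P ^ n := by
    intro P n
    rcases Nat.eq_zero_or_pos n with rfl | hn
    · simp [hp1]
    · exact hspec P n hn
  obtain ⟨K, hK, hh⟩ := cond_transfer hB hA hdown hup _ h
  set t := s + (b + a) with ht
  set W : ℝ := 2 ^ k * K * (k : ℝ) ^ t with hW
  have hW0 : 0 < W := by positivity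
  refine ⟨W ^ (1 / (k : ℝ)), by positivity, fun P n hn hP => ?_⟩
  have hn' : (0 : ℝ) < n := by exact_mod_cast hn
  have hpP := hp.nonneg P
  rw [← pow_le_pow_iff_left₀ (hp.nonneg _) (by positivity) (show k ≠ 0 by omega)]
  have key : p (pderiv j P) ^ k ≤ W * (n : ℝ) ^ t * p P ^ k := by
    calc p (pderiv j P) ^ k = p ((pderiv j P) ^ k) := (hspec' _ _).symm
      _ ≤ k.factorial * p ((pderiv j P) ^ k) := by
        have h1 : (1 : ℝ) ≤ k.factorial := by exact_mod_cast Nat.factorial_pos k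
        have := hp.nonneg ((pderiv j P) ^ k)
        nlinarith
      _ = p (TT j P k k) := by rw [TT_eq, norm_natmul hp]
      _ ≤ ∑ i ∈ Finset.range (k + 1), p ((k.choose i : MvPolynomial (Fin N) ℂ) *
            ((-P) ^ (k - i) * (pderiv j)^[k] (P ^ i))) := norm_sum' hp _ _
      _ ≤ ∑ i ∈ Finset.range (k + 1), (k.choose i : ℝ) * (K * ((k * n : ℕ) : ℝ) ^ t * p P ^ k) := by
        refine Finset.sum_le_sum fun i hi => ?_
        have hi' : i ≤ k := by simpa [Nat.lt_succ_iff] using hi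
        rw [norm_natmul hp]
        gcongr
        refine (hsub _ _).trans ?_
        rw [hspec', norm_neg' hp]
        have h2 := hh (P ^ i) (k * n) (Nat.mul_pos hk hn)
          ((totalDegree_pow P i).trans (Nat.mul_le_mul hi' hP))
        rw [lD_replicate, hspec'] at h2
        calc _ ≤ p P ^ (k - i) * (K * ((k * n : ℕ) : ℝ) ^ t * p P ^ i) := by gcongr
          _ = K * ((k * n : ℕ) : ℝ) ^ t * (p P ^ (k - i) * p P ^ i) := by ring
          _ = _ := by rw [← pow_add, Nat.sub_add_cancel hi']
      _ = _ := by
        rw [← Finset.sum_mul, ← Nat.cast_sum, Nat.sum_range_choose, hW]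
        push_cast
        rw [Real.mul_rpow hk'.le hn'.le]
        ring
  refine key.trans (le_of_eq ?_)
  rw [mul_pow, mul_pow, ← Real.rpow_natCast (W ^ _), ← Real.rpow_natCast ((n : ℝ) ^ _),
    ← Real.rpow_mul hW0.le, ← Real.rpow_mul hn'.le, one_div_mul_cancel hk'.ne',
    div_mul_cancel₀ _ hk'.ne', Real.rpow_one]

theorem lower {N : ℕ} {p q : MvPolynomial (Fin N) ℂ → ℝ} (hp : IsPolyNorm p) (hq : IsPolyNorm q)
    (hspec : ∀ (P : MvPolynomial (Fin N) ℂ) (n : ℕ), 1 ≤ n → p (P ^ n) = p P ^ n)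
    (hsub : ∀ P Q : MvPolynomial (Fin N) ℂ, p (P * Q) ≤ p P * p Q)
    {A B a b : ℝ} (hA : 0 < A) (hB : 0 < B) (ha : 0 ≤ a) (hb : 0 ≤ b)
    (hup : Adm p q A a) (hdown : Adm q p B b) (k : ℕ) (hk : 1 ≤ k) :
    mkExp p 1 ≤ (mkExp q k + ENNReal.ofReal (a + b)) / k := by
  have hk' : (0 : ℝ) < k := by exact_mod_cast hk
  refine iSup₂_le fun α hα => ?_
  obtain ⟨j, rfl⟩ := aux_sum_one α hα
  have h4 : mExp q (Pi.single j k) ≤ mkExp q k :=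
    le_iSup₂_of_le (f := fun α (_ : α ∈ {α : Fin N → ℕ | ∑ j, α j = k}) => mExp q α)
      (Pi.single j k) (by simp) le_rfl
  refine le_trans ?_ (ENNReal.div_le_div_right (add_le_add_left h4 _) _)
  rw [ENNReal.le_div_iff_mul_le (by left; simp; omega) (by left; simp), ← tsub_le_iff_right]
  refine le_sInf ?_
  rintro _ ⟨s, ⟨hs, M, hM, h⟩, rfl⟩
  rw [tsub_le_iff_right]
  have hc := cond_of hq (α := Pi.single j k) (by simpa using hk) hs hM h
  have e : mvDeriv (Pi.single j k) = lD (List.replicate k j) := by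
    funext P; rw [mvDeriv_single, lD_replicate]
  rw [e] at hc
  have h5 := lower_cond hp hspec hsub hA hB hup hdown k hk j hc
  have e : mvDeriv (Pi.single j 1) = fun P => pderiv j P := by
    funext P; rw [mvDeriv_single]; rfl
  rw [← e] at h5
  have h6 := mExp_le (by positivity) h5
  calc _ ≤ ENNReal.ofReal ((s + (b + a)) / k) * k := by gcongr
    _ = ENNReal.ofReal (s + (a + b)) := by
      rw [← ENNReal.ofReal_natCast k, ← ENNReal.ofReal_mul (by positivity),
        div_mul_cancel₀ _ hk'.ne', add_comm b a]
    _ = _ := ENNReal.ofReal_add hs.le (by positivity)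

/-- If `q` is a norm on `ℙ(ℂ^N)` which is spectral admissible with respect
to a spectral, submultiplicative norm `q_σ`, then `lim_{k→∞} m_k(q)/k` exists and equals
`m(q_σ)`; in particular `m*(q) = m(q_σ)` and `m(q_σ) ≤ m(q)`. -/
theorem statement0 {N : ℕ} (q qσ : MvPolynomial (Fin N) ℂ → ℝ)
    (hq : IsPolyNorm q) (hqσ : IsPolyNorm qσ)
    (hspec : ∀ (P : MvPolynomial (Fin N) ℂ) (n : ℕ), 1 ≤ n → qσ (P ^ n) = qσ P ^ n)
    (hsub : ∀ P Q : MvPolynomial (Fin N) ℂ, qσ (P * Q) ≤ qσ P * qσ Q)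
    (A B a b : ℝ) (hA : 0 < A) (hB : 0 < B) (ha : 0 ≤ a) (hb : 0 ≤ b)
    (hup : ∀ P : MvPolynomial (Fin N) ℂ, 1 ≤ P.totalDegree →
      qσ P ≤ A * (P.totalDegree : ℝ) ^ a * q P)
    (hdown : ∀ P : MvPolynomial (Fin N) ℂ, 1 ≤ P.totalDegree →
      q P ≤ B * (P.totalDegree : ℝ) ^ b * qσ P) :
    Tendsto (fun k : ℕ => mkExp q k / (k : ℝ≥0∞)) atTop (nhds (mkExp qσ 1)) ∧
      mStar q = mkExp qσ 1 ∧ mkExp qσ 1 ≤ mkExp q 1 := by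

  obtain ⟨A', hA', hup'⟩ := aux_adm hqσ hq A a hA ha hup
  obtain ⟨B', hB', hdown'⟩ := aux_adm hq hqσ B b hB hb hdown
  have hid : Adm q q 1 0 := fun P n _ _ => by simp
  have hlim : Tendsto (fun k : ℕ => mkExp q k / (k : ℝ≥0∞)) atTop (nhds (mkExp qσ 1)) := by
    have hc : Tendsto (fun k : ℕ => ENNReal.ofReal (a + b) / (k : ℝ≥0∞)) atTop (nhds 0) :=
      ENNReal.Tendsto.const_div ENNReal.tendsto_nat_nhds_top (Or.inr ENNReal.ofReal_ne_top) |>.trans (by simp)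
    have hl : Tendsto (fun k : ℕ => mkExp qσ 1 - ENNReal.ofReal (a + b) / (k : ℝ≥0∞)) atTop
        (nhds (mkExp qσ 1)) := by
      have := ENNReal.Tendsto.sub (tendsto_const_nhds (x := mkExp qσ 1)) hc
        (Or.inr ENNReal.zero_ne_top)
      simpa using this
    have hu : Tendsto (fun k : ℕ => mkExp qσ 1 + ENNReal.ofReal (a + b) / (k : ℝ≥0∞)) atTop
        (nhds (mkExp qσ 1)) := by
      have := (tendsto_const_nhds (x := mkExp qσ 1)).add hc
      simpa using this
    refine tendsto_of_tendsto_of_tendsto_of_le_of_le' hl hu ?_ ?_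
    · filter_upwards [eventually_ge_atTop 1] with k hk
      rw [tsub_le_iff_right, ← ENNReal.add_div]
      exact lower hqσ hq hspec hsub hA' hB' ha hb hup' hdown' k hk
    · filter_upwards [eventually_ge_atTop 1] with k hk
      have h := upper hqσ hA' hB' ha hb hup' hdown' k hk
      have hk0 : (k : ℝ≥0∞) ≠ 0 := by simp; omega
      refine (ENNReal.div_le_div_right h _).trans (le_of_eq ?_)
      rw [ENNReal.add_div, mul_comm, ENNReal.mul_div_cancel_right hk0 (by simp)]
  refine ⟨hlim, hlim.limsup_eq, le_of_tendsto hlim ?_⟩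
  filter_upwards [eventually_ge_atTop 1] with k hk
  have h := upper hq one_pos one_pos le_rfl le_rfl hid hid k hk
  have hk0 : (k : ℝ≥0∞) ≠ 0 := by simp; omega
  refine ENNReal.div_le_of_le_mul ?_
  rw [mul_comm]
  simpa using h
end

section
/- Let q be a spectral, submultiplicative norm on ℙ(ℂ^N), fix j ∈ {1,…,N} and an integer k ≥ 1, and suppose there exist M > 0 and s ≥ 0 such that q(∂^k P/∂x_j^k) ≤ M (deg P)^s q(P) for every polynomial P with deg P ≥ 1. Then for every polynomial P with deg P ≥ 1, q(∂P/∂x_j)^k ≤ (2^k M / k!) (k · deg P)^s q(P)^k, and hence q(∂P/∂x_j) ≤ (2^k M / k!)^{1/k} (k · deg P)^{s/k} q(P). -/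
open MvPolynomial Filter
open scoped ENNReal

theorem aux_leib {R : Type*} [Ring R] (a D L Y : R) (hD : D * a - a * D = L)
    (hL : L * a = a * L) (T : R → R) (hT : ∀ x, T x = x * a - a * x) (n : ℕ) :
    T^[n + 1] (D * Y) = D * T^[n + 1] Y + ((n + 1 : ℕ) : R) * (L * T^[n] Y) := by
  have hadd : ∀ x y, T (x + y) = T x + T y := by intro x y; simp only [hT]; noncomm_ring
  have h1 : ∀ y, T (D * y) = D * T y + L * y := by
    intro y; simp only [hT, ← hD]; noncomm_ring
  have h2 : ∀ y, T (L * y) = L * T y := by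
    intro y
    simp only [hT, mul_sub, ← mul_assoc, hL]
  have h3 : ∀ (m : ℕ) y, T ((m : R) * y) = (m : R) * T y := by
    intro m y
    simp only [hT, mul_sub, ← mul_assoc, (Nat.cast_commute m a).eq]
  induction n with
  | zero => simp [h1]
  | succ n ih =>
    rw [Function.iterate_succ_apply', ih, hadd, h1, h3, h2, ← Function.iterate_succ_apply' T,
      ← Function.iterate_succ_apply' T]
    push_cast
    noncomm_ring

theorem aux_pow {R : Type*} [Ring R] (a D L : R) (hD : D * a - a * D = L)
    (hL : L * a = a * L) (T : R → R) (hT : ∀ x, T x = x * a - a * x) (n : ℕ) :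
    T^[n + 1] (D ^ n) = 0 ∧ T^[n] (D ^ n) = (n.factorial : R) * L ^ n := by
  have h0 : T 0 = 0 := by simp [hT]
  induction n with
  | zero => simp [hT]
  | succ n ih =>
    have e : T^[n + 1 + 1] (D ^ n) = 0 := by
      rw [Function.iterate_succ_apply', ih.1, h0]
    rw [pow_succ', aux_leib a D L _ hD hL T hT, aux_leib a D L _ hD hL T hT, e, ih.1, ih.2]
    refine ⟨by simp, ?_⟩
    rw [Nat.factorial_succ, pow_succ', ← mul_assoc L, ← (Nat.cast_commute _ L).eq]
    push_cast
    noncomm_ring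

theorem aux_binom {R : Type*} [Ring R] (a X : R) (T : R → R)
    (hT : ∀ x, T x = x * a - a * x) (n : ℕ) :
    T^[n] X = ∑ i ∈ Finset.range (n + 1),
      ((-1 : ℤ) ^ i * (n.choose i : ℤ)) • (a ^ i * X * a ^ (n - i)) := by
  let l : Module.End ℤ R := -LinearMap.mulLeft ℤ a
  let r : Module.End ℤ R := LinearMap.mulRight ℤ a
  have hc : Commute l r := (LinearMap.commute_mulLeft_right (R := ℤ) a a).neg_left
  have hTe : T = ⇑(l + r) := by
    funext x; simp [hT, l, r]; abel
  rw [hTe, ← Module.End.coe_pow, hc.add_pow, LinearMap.sum_apply]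
  refine Finset.sum_congr rfl fun i _ => ?_
  have hl : l ^ i = (-1 : ℤ) ^ i • LinearMap.mulLeft ℤ (a ^ i) := by
    simp only [l]
    rw [neg_pow, LinearMap.pow_mulLeft]
    ext x
    rcases neg_one_pow_eq_or (Module.End ℤ R) i with h | h <;>
    rcases Nat.even_or_odd i with h' | h' <;> simp [h'.neg_one_pow]
  have hr : r ^ (n - i) = LinearMap.mulRight ℤ (a ^ (n - i)) := LinearMap.pow_mulRight ..
  rw [hl, hr, ← (Nat.cast_commute (n.choose i) _).eq, ← nsmul_eq_mul]
  rcases Nat.even_or_odd i with h | h <;> simp [h.neg_one_pow, mul_assoc]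

theorem aux_identity {N : ℕ} (j : Fin N) (k : ℕ) (P : MvPolynomial (Fin N) ℂ) :
    (k.factorial : ℂ) • (pderiv j P) ^ k = ∑ i ∈ Finset.range (k + 1),
      ((-1 : ℂ) ^ i * (k.choose i : ℂ)) •
        (P ^ i * (fun Q : MvPolynomial (Fin N) ℂ => pderiv j Q)^[k] (P ^ (k - i))) := by
  let D : Module.End ℂ (MvPolynomial (Fin N) ℂ) := (pderiv j).toLinearMap
  let a : Module.End ℂ (MvPolynomial (Fin N) ℂ) := LinearMap.mulLeft ℂ P
  let L : Module.End ℂ (MvPolynomial (Fin N) ℂ) := LinearMap.mulLeft ℂ (pderiv j P)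
  have hD : D * a - a * D = L := by
    refine LinearMap.ext fun x => ?_
    simp [D, a, L, Derivation.leibniz]; ring
  have hL : L * a = a * L := by
    refine LinearMap.ext fun x => ?_
    simp [a, L]; ring
  have key := (aux_pow a D L hD hL (fun x => x * a - a * x) (fun _ => rfl) k).2
  rw [aux_binom a (D ^ k) _ (fun _ => rfl) k] at key
  have key1 := congrArg (fun f => f 1) key
  simp only [LinearMap.sum_apply] at key1
  have hLk : ((k.factorial : Module.End ℂ (MvPolynomial (Fin N) ℂ)) * L ^ k) 1
      = (k.factorial : ℂ) • (pderiv j P) ^ k := by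
    rw [← nsmul_eq_mul]
    simp [L, LinearMap.pow_mulLeft, Nat.cast_smul_eq_nsmul]
  rw [hLk] at key1
  rw [← key1]
  refine Finset.sum_congr rfl fun i _ => ?_
  have hDk : ∀ x, (D ^ k) x = (fun Q : MvPolynomial (Fin N) ℂ => pderiv j Q)^[k] x := by
    intro x; rw [Module.End.coe_pow]; rfl
  have : ((-1 : ℂ) ^ i * (k.choose i : ℂ)) = (((-1 : ℤ) ^ i * (k.choose i : ℤ) : ℤ) : ℂ) := by
    push_cast; rfl
  rw [this, Int.cast_smul_eq_zsmul]
  simp only [LinearMap.smul_apply, Module.End.mul_apply, hDk]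
  simp only [a, LinearMap.pow_mulLeft, LinearMap.mulLeft_apply, mul_one]

/-- Let `q` be a spectral, submultiplicative norm on `ℙ(ℂ^N)`, `j` a fixed
variable and `k ≥ 1` an integer, and suppose `q(∂^k P/∂x_j^k) ≤ M (deg P)^s q(P)` for all `P`
with `deg P ≥ 1`. Then `q(∂P/∂x_j)^k ≤ (2^k M / k!) (k·deg P)^s q(P)^k`, and hence
`q(∂P/∂x_j) ≤ (2^k M / k!)^{1/k} (k·deg P)^{s/k} q(P)`. -/
theorem statement4 {N : ℕ} (q : MvPolynomial (Fin N) ℂ → ℝ) (hq : IsPolyNorm q)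
    (hspec : ∀ (P : MvPolynomial (Fin N) ℂ) (n : ℕ), 1 ≤ n → q (P ^ n) = q P ^ n)
    (hsub : ∀ P Q : MvPolynomial (Fin N) ℂ, q (P * Q) ≤ q P * q Q)
    (j : Fin N) (k : ℕ) (hk : 1 ≤ k) (M s : ℝ) (hM : 0 < M) (hs : 0 ≤ s)
    (h : ∀ P : MvPolynomial (Fin N) ℂ, 1 ≤ P.totalDegree →
      q ((fun Q : MvPolynomial (Fin N) ℂ => MvPolynomial.pderiv j Q)^[k] P) ≤
        M * (P.totalDegree : ℝ) ^ s * q P) :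
    ∀ P : MvPolynomial (Fin N) ℂ, 1 ≤ P.totalDegree →
      q (MvPolynomial.pderiv j P) ^ k ≤
          2 ^ k * M / (k.factorial : ℝ) * ((k * P.totalDegree : ℕ) : ℝ) ^ s * q P ^ k ∧
        q (MvPolynomial.pderiv j P) ≤
          (2 ^ k * M / (k.factorial : ℝ)) ^ ((1 : ℝ) / (k : ℝ)) *
            ((k * P.totalDegree : ℕ) : ℝ) ^ (s / (k : ℝ)) * q P := by
  intro P hP
  have hq0 : q 0 = 0 := by simpa using hq.homog 0 0
  have hqP := hq.nonneg P
  have hsum : ∀ (t : Finset ℕ) (f : ℕ → MvPolynomial (Fin N) ℂ),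
      q (∑ i ∈ t, f i) ≤ ∑ i ∈ t, q (f i) := by
    intro t f
    induction t using Finset.induction_on with
    | empty => simp [hq0]
    | insert b t hb ih =>
      rw [Finset.sum_insert hb, Finset.sum_insert hb]
      exact (hq.triangle _ _).trans (by linarith)
  have hmul : ∀ (i : ℕ) X, q (P ^ i * X) ≤ q P ^ i * q X := by
    intro i X
    induction i with
    | zero => simp
    | succ i ih =>
      rw [pow_succ', pow_succ', mul_assoc, mul_assoc]
      exact (hsub _ _).trans (mul_le_mul_of_nonneg_left ih hqP)
  have hkP : 0 ≤ ((k * P.totalDegree : ℕ) : ℝ) ^ s := by positivity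
  have hterm : ∀ i ∈ Finset.range (k + 1), q (((-1 : ℂ) ^ i * (k.choose i : ℂ)) •
        (P ^ i * (fun Q : MvPolynomial (Fin N) ℂ => pderiv j Q)^[k] (P ^ (k - i)))) ≤
        (k.choose i : ℝ) * (M * ((k * P.totalDegree : ℕ) : ℝ) ^ s * q P ^ k) := by
    intro i hi
    have hi' : i ≤ k := by simpa [Nat.lt_succ_iff] using hi
    rw [hq.homog]
    have : ‖(-1 : ℂ) ^ i * (k.choose i : ℂ)‖ = (k.choose i : ℝ) := by simp
    rw [this]
    refine mul_le_mul_of_nonneg_left ?_ (by positivity)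
    refine (hmul _ _).trans ?_
    rcases hi'.eq_or_lt with rfl | hlt
    · have h1 : (fun Q : MvPolynomial (Fin N) ℂ => pderiv j Q)^[i] (P ^ (i - i)) = 0 := by
        obtain ⟨m, rfl⟩ : ∃ m, i = m + 1 := ⟨i - 1, by omega⟩
        rw [Nat.sub_self, pow_zero, Function.iterate_succ_apply]
        simp only [pderiv_one]
        exact Function.iterate_fixed (map_zero _) m
      rw [h1, hq0]
      simp only [mul_zero]
      positivity
    · have hd : (P ^ (k - i)).totalDegree = (k - i) * P.totalDegree := by
        have hP0 : P ≠ 0 := by rintro rfl; simp at hP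
        generalize k - i = m
        induction m with
        | zero => simp
        | succ m ih =>
          rw [pow_succ, totalDegree_mul_of_isDomain (pow_ne_zero _ hP0) hP0, ih]; ring
      have hd1 : 1 ≤ (P ^ (k - i)).totalDegree := by
        rw [hd]; exact Nat.mul_pos (by omega) hP
      have h2 := h _ hd1
      rw [hspec _ _ (by omega)] at h2
      have h3 : ((P ^ (k - i)).totalDegree : ℝ) ^ s ≤ ((k * P.totalDegree : ℕ) : ℝ) ^ s := by
        refine Real.rpow_le_rpow (by positivity) ?_ hs
        rw [hd]
        exact_mod_cast Nat.mul_le_mul_right _ (Nat.sub_le _ _)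
      calc _ ≤ q P ^ i * (M * ((k * P.totalDegree : ℕ) : ℝ) ^ s * q P ^ (k - i)) := by
            refine mul_le_mul_of_nonneg_left (h2.trans ?_) (by positivity)
            gcongr
        _ = M * ((k * P.totalDegree : ℕ) : ℝ) ^ s * (q P ^ i * q P ^ (k - i)) := by ring
        _ = _ := by rw [← pow_add, Nat.add_sub_cancel' hi']
  have hfac : (0 : ℝ) < (k.factorial : ℝ) := by positivity
  have main : q (pderiv j P) ^ k ≤
      2 ^ k * M / (k.factorial : ℝ) * ((k * P.totalDegree : ℕ) : ℝ) ^ s * q P ^ k := by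
    have e1 := congrArg q (aux_identity j k P)
    rw [hq.homog, hspec _ _ hk] at e1
    have e2 := (hsum _ _).trans (Finset.sum_le_sum hterm)
    rw [← e1, ← Finset.sum_mul, ← Nat.cast_sum, Nat.sum_range_choose] at e2
    simp only [Complex.norm_natCast, Nat.cast_pow, Nat.cast_ofNat] at e2
    rw [div_mul_eq_mul_div, div_mul_eq_mul_div, le_div_iff₀ hfac]
    linarith
  refine ⟨main, ?_⟩
  have hk0 : k ≠ 0 := by omega
  have hkr : (k : ℝ) ≠ 0 := by exact_mod_cast hk0
  have hC : 0 ≤ 2 ^ k * M / (k.factorial : ℝ) := by positivity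
  refine le_of_pow_le_pow_left₀ hk0 (by positivity) (main.trans (le_of_eq ?_))
  rw [mul_pow, mul_pow, ← Real.rpow_mul_natCast hC, ← Real.rpow_mul_natCast (by positivity),
    div_mul_cancel₀ _ hkr, div_mul_cancel₀ _ hkr, Real.rpow_one]
end

section
/- Let q be a norm on ℙ(ℂ^N) that is spectral admissible with respect to a spectral, submultiplicative norm q_σ with m(q_σ) < ∞. If there exists M > 0 such that q(∂P/∂x_j) ≤ M (deg P)^{m(q_σ)} q(P) for every j ∈ {1,…,N} and every polynomial P with deg P ≥ 1, then the exponent m(q_σ) is best possible for q; that is, m(q) = m(q_σ). -/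
open MvPolynomial Filter
open scoped ENNReal

namespace S6

lemma foldl_single {X : Type*} : ∀ {n : ℕ} (f : Fin n → X → X) (j : Fin n)
    (_ : ∀ i, i ≠ j → f i = id) (x : X),
    (List.ofFn f).foldl (fun Q g => g Q) x = f j x := by
  have hid : ∀ {n : ℕ} (f : Fin n → X → X) (_ : ∀ i, f i = id) (x : X),
      (List.ofFn f).foldl (fun Q g => g Q) x = x := by
    intro n
    induction n with
    | zero => intro f _ x; simp
    | succ n ih =>
      intro f h x
      rw [List.ofFn_succ, List.foldl_cons, ih _ (fun i => h _), h 0]; rfl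
  intro n
  induction n with
  | zero => intro f j; exact j.elim0
  | succ n ih =>
    intro f j h x
    rw [List.ofFn_succ, List.foldl_cons]
    refine Fin.cases (fun h => ?_) (fun j h => ?_) j h
    · rw [hid _ (fun i => h _ (Fin.succ_ne_zero i))]
    · rw [ih _ j (fun i hi => h _ (fun e => hi (Fin.succ_injective _ e))),
        h 0 (Fin.succ_ne_zero j).symm]; rfl

lemma mvDeriv_single {N : ℕ} (j : Fin N) (P : MvPolynomial (Fin N) ℂ) :
    mvDeriv (Pi.single j 1) P = pderiv j P := by
  unfold mvDeriv
  rw [foldl_single _ j]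
  · simp
  · intro i hi; simp [Pi.single_eq_of_ne hi]

lemma eq_single {N : ℕ} (α : Fin N → ℕ) (h : ∑ j, α j = 1) : ∃ j, α = Pi.single j 1 := by
  have h0 : ∃ j, α j ≠ 0 := by
    by_contra! hc
    simp [hc] at h
  obtain ⟨j, hj⟩ := h0
  refine ⟨j, ?_⟩
  rw [← Finset.add_sum_erase _ _ (Finset.mem_univ j)] at h
  have h1 : ∑ x ∈ Finset.univ.erase j, α x = 0 := by omega
  have h2 : α j = 1 := by omega
  ext i
  by_cases hi : i = j
  · subst hi; simpa using h2
  · rw [Pi.single_eq_of_ne hi]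
    exact (Finset.sum_eq_zero_iff.mp h1) i (by simp [hi])

lemma mkExp_le {N : ℕ} (q : MvPolynomial (Fin N) ℂ → ℝ) (s : ℝ) (hs : 0 < s)
    (h : ∀ j : Fin N, ∃ M : ℝ, 0 < M ∧ ∀ P : MvPolynomial (Fin N) ℂ, 1 ≤ P.totalDegree →
      q (pderiv j P) ≤ M * (P.totalDegree : ℝ) ^ s * q P) :
    mkExp q 1 ≤ ENNReal.ofReal s := by
  unfold mkExp
  refine iSup₂_le fun α hα => ?_
  obtain ⟨j, rfl⟩ := eq_single α hα
  refine sInf_le ⟨s, ⟨hs, ?_⟩, rfl⟩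
  simpa only [mvDeriv_single] using h j

lemma of_mkExp_lt {N : ℕ} (q : MvPolynomial (Fin N) ℂ → ℝ) (hq : ∀ P, 0 ≤ q P) (s : ℝ)
    (h : mkExp q 1 < ENNReal.ofReal s) (j : Fin N) :
    ∃ M : ℝ, 0 < M ∧ ∀ P : MvPolynomial (Fin N) ℂ, 1 ≤ P.totalDegree →
      q (pderiv j P) ≤ M * (P.totalDegree : ℝ) ^ s * q P := by
  have h1 : mExp q (Pi.single j 1) < ENNReal.ofReal s := by
    refine lt_of_le_of_lt ?_ h
    unfold mkExp
    exact le_iSup₂_of_le (Pi.single j 1) (by simp) le_rfl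
  obtain ⟨_, ⟨t, ⟨ht, M, hM, hP⟩, rfl⟩, hlt⟩ := sInf_lt_iff.mp h1
  have hts : t < s := (ENNReal.ofReal_lt_ofReal_iff_of_nonneg ht.le).mp hlt
  refine ⟨M, hM, fun P hd => ?_⟩
  have := hP P hd
  rw [mvDeriv_single] at this
  refine this.trans ?_
  have hd' : (1 : ℝ) ≤ P.totalDegree := by exact_mod_cast hd
  have := hq P
  gcongr

lemma key {R : Type*} [CommRing R] [Algebra ℂ R] (D : Derivation ℂ R R) (P : R) (k n : ℕ) :
    ∑ j ∈ Finset.range (n + 2), ((n + 1).choose j : R) * (-P) ^ (n + 1 - j) * D^[k + 1] (P ^ j)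
    = D (∑ j ∈ Finset.range (n + 2), ((n + 1).choose j : R) * (-P) ^ (n + 1 - j) * D^[k] (P ^ j))
      + (n + 1) * D P *
        ∑ j ∈ Finset.range (n + 1), (n.choose j : R) * (-P) ^ (n - j) * D^[k] (P ^ j) := by
  rw [map_sum, Finset.mul_sum, Finset.sum_range_succ, Finset.sum_range_succ _ (n + 1),
    add_right_comm, ← Finset.sum_add_distrib]
  congr 1
  · refine Finset.sum_congr rfl fun j hj => ?_
    have hj' : j ≤ n := by simpa [Nat.lt_succ_iff] using hj
    have e : ((n.choose j : ℕ) : R) * (n + 1) = ((n + 1).choose j : ℕ) * ((n + 1 - j : ℕ) : R) := by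
      exact_mod_cast congrArg (Nat.cast : ℕ → R) (Nat.choose_mul_succ_eq n j)
    have e2 : n + 1 - j - 1 = n - j := by omega
    rw [Function.iterate_succ_apply', D.leibniz, D.leibniz, D.leibniz_pow, e2]
    simp only [smul_eq_mul, nsmul_eq_mul, Derivation.map_natCast, mul_zero, add_zero, map_neg]
    linear_combination (D P) * (-P) ^ (n - j) * D^[k] (P ^ j) * (-e)
  · simp [Function.iterate_succ_apply']

lemma key_zero {R : Type*} [CommRing R] [Algebra ℂ R] (D : Derivation ℂ R R) (P : R) (k : ℕ) :
    ∀ n, k < n →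
    ∑ j ∈ Finset.range (n + 1), (n.choose j : R) * (-P) ^ (n - j) * D^[k] (P ^ j) = 0 := by
  induction k with
  | zero =>
    intro n hn
    have := add_pow P (-P) n
    rw [add_neg_cancel, zero_pow (by omega)] at this
    rw [this]
    refine Finset.sum_congr rfl fun j _ => ?_
    simp; ring
  | succ k ih =>
    intro n hn
    obtain ⟨n, rfl⟩ : ∃ m, n = m + 1 := ⟨n - 1, by omega⟩
    rw [key, ih _ (by omega), ih _ (by omega)]; simp

lemma key_fact {R : Type*} [CommRing R] [Algebra ℂ R] (D : Derivation ℂ R R) (P : R) (n : ℕ) :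
    ∑ j ∈ Finset.range (n + 1), (n.choose j : R) * (-P) ^ (n - j) * D^[n] (P ^ j)
      = (n.factorial : R) * (D P) ^ n := by
  induction n with
  | zero => simp
  | succ n ih =>
    rw [key, key_zero _ _ _ _ (by omega), ih, Nat.factorial_succ]
    push_cast; simp; ring

lemma norm_zero' {N : ℕ} {q : MvPolynomial (Fin N) ℂ → ℝ} (hq : IsPolyNorm q) : q 0 = 0 := by
  have := hq.homog 0 0
  simpa using this

lemma norm_sum {N : ℕ} {q : MvPolynomial (Fin N) ℂ → ℝ} (hq : IsPolyNorm q) {ι : Type*}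
    (s : Finset ι) (f : ι → MvPolynomial (Fin N) ℂ) : q (∑ i ∈ s, f i) ≤ ∑ i ∈ s, q (f i) := by
  classical
  induction s using Finset.induction_on with
  | empty => simp [norm_zero' hq]
  | insert i s hi ih =>
    rw [Finset.sum_insert hi, Finset.sum_insert hi]
    exact (hq.triangle _ _).trans (by gcongr)

lemma norm_one_pos {N : ℕ} {q : MvPolynomial (Fin N) ℂ → ℝ} (hq : IsPolyNorm q) : 0 < q 1 :=
  lt_of_le_of_ne (hq.nonneg 1) fun h => one_ne_zero (hq.definite 1 h.symm)

/-- comparison including constants -/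
lemma compare {N : ℕ} {q p : MvPolynomial (Fin N) ℂ → ℝ} (hq : IsPolyNorm q) (hp : IsPolyNorm p)
    (A a : ℝ) (hA : 0 < A) (ha : 0 ≤ a)
    (h : ∀ P : MvPolynomial (Fin N) ℂ, 1 ≤ P.totalDegree →
      p P ≤ A * (P.totalDegree : ℝ) ^ a * q P) :
    ∃ A' : ℝ, 0 < A' ∧ ∀ (P : MvPolynomial (Fin N) ℂ) (d : ℕ), 1 ≤ d → P.totalDegree ≤ d →
      p P ≤ A' * (d : ℝ) ^ a * q P := by
  refine ⟨max A (p 1 / q 1), lt_max_of_lt_left hA, fun P d hd hP => ?_⟩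
  have hq0 := hq.nonneg P
  have hd' : (1 : ℝ) ≤ d := by exact_mod_cast hd
  rcases Nat.eq_zero_or_pos P.totalDegree with h0 | h0
  · rw [totalDegree_eq_zero_iff_eq_C] at h0
    have e : P = (coeff 0 P) • (1 : MvPolynomial (Fin N) ℂ) := by
      rw [smul_eq_C_mul, mul_one]; exact h0
    have e1 : p P = ‖coeff 0 P‖ * p 1 := by conv_lhs => rw [e, hp.homog]
    have e2 : q P = ‖coeff 0 P‖ * q 1 := by conv_lhs => rw [e, hq.homog]
    have := norm_one_pos hq
    have e3 : p P = p 1 / q 1 * 1 * q P := by rw [e1, e2]; field_simp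
    rw [e3]
    gcongr
    · exact le_max_right _ _
    · exact Real.one_le_rpow hd' ha
  · refine (h P h0).trans ?_
    gcongr
    exact le_max_left _ _

lemma totalDegree_pderiv_le' {N : ℕ} (j : Fin N) (P : MvPolynomial (Fin N) ℂ) :
    (pderiv j P).totalDegree ≤ P.totalDegree := by
  conv_lhs => rw [P.as_sum, map_sum]
  refine totalDegree_finsetSum_le fun m hm => ?_
  rw [pderiv_monomial]
  refine (totalDegree_monomial_le _ _).trans (le_trans ?_ (le_totalDegree hm))
  exact Finsupp.degree_mono tsub_le_self

lemma markov_iter {N : ℕ} {q : MvPolynomial (Fin N) ℂ → ℝ} (hq : IsPolyNorm q) (j : Fin N)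
    (M s : ℝ) (hM : 0 < M) (hs : 0 < s)
    (h : ∀ P : MvPolynomial (Fin N) ℂ, 1 ≤ P.totalDegree →
      q (pderiv j P) ≤ M * (P.totalDegree : ℝ) ^ s * q P) (d : ℕ) (P : MvPolynomial (Fin N) ℂ)
    (hP : P.totalDegree ≤ d) (k : ℕ) :
    ((pderiv j)^[k] P).totalDegree ≤ d ∧ q ((pderiv j)^[k] P) ≤ (M * (d : ℝ) ^ s) ^ k * q P := by
  have h' : ∀ R : MvPolynomial (Fin N) ℂ, R.totalDegree ≤ d →
      q (pderiv j R) ≤ M * (d : ℝ) ^ s * q R := by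
    intro R hR
    have := hq.nonneg R
    rcases Nat.eq_zero_or_pos R.totalDegree with h0 | h0
    · rw [totalDegree_eq_zero_iff_eq_C] at h0
      have : pderiv j R = 0 := by rw [h0]; simp
      rw [this, norm_zero' hq]; positivity
    · refine (h R h0).trans ?_
      gcongr
  induction k with
  | zero => simpa using hP
  | succ k ih =>
    rw [Function.iterate_succ_apply']
    refine ⟨(totalDegree_pderiv_le' _ _).trans ih.1, (h' _ ih.1).trans ?_⟩
    rw [pow_succ', mul_assoc (M * (d : ℝ) ^ s)]
    exact mul_le_mul_of_nonneg_left ih.2 (by positivity)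

lemma core {N : ℕ} {q p : MvPolynomial (Fin N) ℂ → ℝ}
    (hq : IsPolyNorm q) (hp : IsPolyNorm p)
    (hspec : ∀ (P : MvPolynomial (Fin N) ℂ) (n : ℕ), 1 ≤ n → p (P ^ n) = p P ^ n)
    (hsub : ∀ P Q : MvPolynomial (Fin N) ℂ, p (P * Q) ≤ p P * p Q)
    (A B a b : ℝ) (hA : 0 < A) (hB : 0 < B) (ha : 0 ≤ a) (hb : 0 ≤ b)
    (hup : ∀ (P : MvPolynomial (Fin N) ℂ) (d : ℕ), 1 ≤ d → P.totalDegree ≤ d →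
      p P ≤ A * (d : ℝ) ^ a * q P)
    (hdown : ∀ (P : MvPolynomial (Fin N) ℂ) (d : ℕ), 1 ≤ d → P.totalDegree ≤ d →
      q P ≤ B * (d : ℝ) ^ b * p P) (j : Fin N)
    (M s : ℝ) (hM : 0 < M) (hs : 0 < s)
    (h : ∀ P : MvPolynomial (Fin N) ℂ, 1 ≤ P.totalDegree →
      q (pderiv j P) ≤ M * (P.totalDegree : ℝ) ^ s * q P) (n : ℕ) (hn : 1 ≤ n) :
    ∃ C : ℝ, 0 < C ∧ ∀ P : MvPolynomial (Fin N) ℂ, 1 ≤ P.totalDegree →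
      p (pderiv j P) ≤ C * (P.totalDegree : ℝ) ^ (s + (a + b) / n) * p P := by
  have hn0 : (0 : ℝ) < n := by exact_mod_cast hn
  have p1 : p 1 = 1 := by
    have h1 := hspec 1 2 (by norm_num)
    have h2 := norm_one_pos hp
    rw [one_pow] at h1
    nlinarith
  have hspec' : ∀ (P : MvPolynomial (Fin N) ℂ) (n : ℕ), p (P ^ n) = p P ^ n := by
    intro P n
    rcases Nat.eq_zero_or_pos n with rfl | hn
    · simp [p1]
    · exact hspec P n hn
  have pneg : ∀ P, p (-P) = p P := by
    intro P
    have := hp.homog (-1) P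
    simpa using this
  have pnat : ∀ (m : ℕ) (P : MvPolynomial (Fin N) ℂ), p ((m : MvPolynomial (Fin N) ℂ) * P) = m * p P := by
    intro m P
    have := hp.homog (m : ℂ) P
    rw [smul_eq_C_mul] at this
    simpa using this
  set X : ℝ := 2 ^ n * (A * B * (n : ℝ) ^ (a + b)) * (M * (n : ℝ) ^ s) ^ n with hX
  have hX0 : 0 < X := by positivity
  refine ⟨X ^ ((n : ℝ)⁻¹), by positivity, fun P hd => ?_⟩
  set d := P.totalDegree with hdd
  have hd0 : (0 : ℝ) < d := by exact_mod_cast hd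
  have hpP := hp.nonneg P
  have hpD := hp.nonneg (pderiv j P)
  have hnd : 1 ≤ n * d := Nat.mul_pos hn hd
  set e : ℝ := ((n * d : ℕ) : ℝ) with he
  have he0 : 0 < e := by rw [he]; exact_mod_cast hnd
  refine le_of_pow_le_pow_left₀ (n := n) (by omega) (by positivity) ?_
  have term : ∀ i ∈ Finset.range (n + 1),
      p ((n.choose i : MvPolynomial (Fin N) ℂ) * (-P) ^ (n - i) * (pderiv j)^[n] (P ^ i))
      ≤ (n.choose i : ℝ) * (A * e ^ a * ((M * e ^ s) ^ n * (B * e ^ b)) * p P ^ n) := by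
    intro i hi
    have hi' : i ≤ n := by simpa [Nat.lt_succ_iff] using hi
    have hdeg : (P ^ i).totalDegree ≤ n * d :=
      (totalDegree_pow _ _).trans (Nat.mul_le_mul_right _ hi')
    obtain ⟨h1, h2⟩ := markov_iter hq j M s hM hs h (n * d) (P ^ i) hdeg n
    have h3 := hup _ _ hnd h1
    have h4 := hdown _ _ hnd hdeg
    rw [hspec'] at h4
    rw [mul_assoc, pnat]
    gcongr
    refine (hsub _ _).trans ?_
    rw [hspec', pneg]
    calc p P ^ (n - i) * p ((pderiv j)^[n] (P ^ i))
        ≤ p P ^ (n - i) * (A * e ^ a * ((M * e ^ s) ^ n * (B * e ^ b * p P ^ i))) := by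
          gcongr
          refine h3.trans ?_
          gcongr
          refine h2.trans ?_
          gcongr
      _ = A * e ^ a * ((M * e ^ s) ^ n * (B * e ^ b)) * (p P ^ (n - i) * p P ^ i) := by ring
      _ = _ := by rw [← pow_add, Nat.sub_add_cancel hi']
  have hk := key_fact (pderiv j) P n
  have hk2 := congrArg p hk
  rw [pnat, hspec'] at hk2
  have h5 : p (pderiv j P) ^ n ≤ n.factorial * p (pderiv j P) ^ n := by
    have : (1 : ℝ) ≤ n.factorial := by exact_mod_cast Nat.factorial_pos n
    exact le_mul_of_one_le_left (by positivity) this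
  refine h5.trans ?_
  rw [← hk2]
  refine (norm_sum hp _ _).trans ((Finset.sum_le_sum term).trans (le_of_eq ?_))
  rw [← Finset.sum_mul]
  have h6 : ∑ i ∈ Finset.range (n + 1), (n.choose i : ℝ) = 2 ^ n := by
    exact_mod_cast Nat.sum_range_choose n
  rw [h6, mul_pow (_ * _) (p P), mul_pow (X ^ _), ← Real.rpow_natCast (X ^ _), ← Real.rpow_mul hX0.le,
    inv_mul_cancel₀ hn0.ne', Real.rpow_one, ← Real.rpow_natCast ((d : ℝ) ^ _),
    ← Real.rpow_mul hd0.le]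
  have h7 : (s + (a + b) / n) * n = s * n + a + b := by field_simp; ring
  have h8 : e = n * d := by rw [he]; push_cast; ring
  rw [h7, Real.rpow_add hd0, Real.rpow_add hd0, Real.rpow_mul hd0.le, Real.rpow_natCast, hX, h8,
    Real.mul_rpow hn0.le hd0.le, Real.mul_rpow hn0.le hd0.le, Real.mul_rpow hn0.le hd0.le,
    Real.rpow_add hn0]
  ring

end S6

/-- Let `q` be spectral admissible with respect to a spectral,
submultiplicative norm `q_σ` with `m(q_σ) < ∞`. If Markov's inequality for `q` holds with
the exponent `m(q_σ)` (for all coordinate derivatives), then this exponent is best possible: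
`m(q) = m(q_σ)`. -/
theorem statement6 {N : ℕ} (q qσ : MvPolynomial (Fin N) ℂ → ℝ)
    (hq : IsPolyNorm q) (hqσ : IsPolyNorm qσ)
    (hspec : ∀ (P : MvPolynomial (Fin N) ℂ) (n : ℕ), 1 ≤ n → qσ (P ^ n) = qσ P ^ n)
    (hsub : ∀ P Q : MvPolynomial (Fin N) ℂ, qσ (P * Q) ≤ qσ P * qσ Q)
    (A B a b : ℝ) (hA : 0 < A) (hB : 0 < B) (ha : 0 ≤ a) (hb : 0 ≤ b)
    (hup : ∀ P : MvPolynomial (Fin N) ℂ, 1 ≤ P.totalDegree →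
      qσ P ≤ A * (P.totalDegree : ℝ) ^ a * q P)
    (hdown : ∀ P : MvPolynomial (Fin N) ℂ, 1 ≤ P.totalDegree →
      q P ≤ B * (P.totalDegree : ℝ) ^ b * qσ P)
    (hfin : mkExp qσ 1 ≠ ⊤)
    (M : ℝ) (hM : 0 < M)
    (hmar : ∀ (j : Fin N) (P : MvPolynomial (Fin N) ℂ), 1 ≤ P.totalDegree →
      q (MvPolynomial.pderiv j P) ≤ M * (P.totalDegree : ℝ) ^ (mkExp qσ 1).toReal * q P) :
    mkExp q 1 = mkExp qσ 1 := by
  have h1 : mkExp q 1 ≤ mkExp qσ 1 := by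
    refine ENNReal.le_of_forall_pos_le_add fun ε hε _ => ?_
    have hm : 0 ≤ (mkExp qσ 1).toReal := ENNReal.toReal_nonneg
    have hε' : (0 : ℝ) < ε := by exact_mod_cast hε
    have : mkExp qσ 1 + ε = ENNReal.ofReal ((mkExp qσ 1).toReal + ε) := by
      rw [ENNReal.ofReal_add hm hε'.le, ENNReal.ofReal_toReal hfin, ENNReal.ofReal_coe_nnreal]
    rw [this]
    refine S6.mkExp_le q _ (by positivity) fun j => ⟨M, hM, fun P hd => (hmar j P hd).trans ?_⟩
    have hd' : (1 : ℝ) ≤ P.totalDegree := by exact_mod_cast hd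
    have := hq.nonneg P
    gcongr
    linarith
  refine le_antisymm h1 ?_
  have hfin' : mkExp q 1 ≠ ⊤ := ne_top_of_le_ne_top hfin h1
  refine ENNReal.le_of_forall_pos_le_add fun ε hε _ => ?_
  have hm : 0 ≤ (mkExp q 1).toReal := ENNReal.toReal_nonneg
  have hε' : (0 : ℝ) < ε := by exact_mod_cast hε
  have e : mkExp q 1 + ε = ENNReal.ofReal ((mkExp q 1).toReal + ε) := by
    rw [ENNReal.ofReal_add hm hε'.le, ENNReal.ofReal_toReal hfin', ENNReal.ofReal_coe_nnreal]
  rw [e]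
  obtain ⟨A', hA', hup'⟩ := S6.compare hq hqσ A a hA ha hup
  obtain ⟨B', hB', hdown'⟩ := S6.compare hqσ hq B b hB hb hdown
  obtain ⟨n, hn⟩ := exists_nat_gt ((a + b) / (ε / 2))
  have hn0 : (0 : ℝ) < n := lt_of_le_of_lt (by positivity) hn
  have hn1 : 1 ≤ n := by exact_mod_cast hn0
  have hn2 : (a + b) / n ≤ ε / 2 := by
    rw [div_lt_iff₀ (by positivity)] at hn
    rw [div_le_iff₀ hn0]; linarith
  have hlt : mkExp q 1 < ENNReal.ofReal ((mkExp q 1).toReal + ε / 2) := by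
    conv_lhs => rw [← ENNReal.ofReal_toReal hfin']
    exact (ENNReal.ofReal_lt_ofReal_iff_of_nonneg hm).mpr (by linarith)
  have h2 : mkExp qσ 1 ≤ ENNReal.ofReal ((mkExp q 1).toReal + ε / 2 + (a + b) / n) := by
    refine S6.mkExp_le qσ _ (by positivity) fun j => ?_
    obtain ⟨M', hM', hP⟩ := S6.of_mkExp_lt q hq.nonneg _ hlt j
    exact S6.core hq hqσ hspec hsub A' B' a b hA' hB' ha hb hup' hdown' j M' _ hM'
      (by positivity) hP n hn1
  exact h2.trans (ENNReal.ofReal_le_ofReal (by linarith))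
end

section
/- Let ‖·‖₀ be a seminorm on ℂ[X], let m > 0 and let s ≥ 1 be an integer, and define q_{m,s}(P) = Σ_{r=0}^∞ ‖P^{(rs)}‖₀ / ((rs)!)^m. Suppose there exist constants A, B > 0 such that ‖P^{(j)}‖₀ ≤ A‖P‖₀ + B‖P^{(s)}‖₀ for every P ∈ ℂ[X] and every j ∈ {1,…,s}. Then for every t ∈ ℕ, every j ∈ {1,…,s} and every P ∈ ℂ[X] with deg P ≥ 1, q_{m,s}(P^{(st+j)}) ≤ (A + max(B,1)) · (deg P)^{s(t+1)m} · q_{m,s}(P). Consequently m_k(q_{m,s}) ≤ s·m·⌈k/s⌉ for every integer k ≥ 1. -/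
open Polynomial Filter
open scoped ENNReal

/-- The `k`-th derivative `P^{(k)}` of a polynomial in one complex variable. -/
noncomputable def dIter (k : ℕ) (P : Polynomial ℂ) : Polynomial ℂ :=
  (fun Q : Polynomial ℂ => Polynomial.derivative Q)^[k] P

/-- The Markov exponent `m_k(q) ∈ [0,∞]` for a (semi)norm `q` on `ℂ[X]`: the infimum of the
set of `s > 0` such that `q(P^{(k)}) ≤ M (deg P)^s q(P)` for some `M > 0` and all `P` with
`deg P ≥ 1` (`sInf ∅ = ∞` in `ℝ≥0∞`). -/
noncomputable def mkPoly (q : Polynomial ℂ → ℝ) (k : ℕ) : ℝ≥0∞ :=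
  sInf (ENNReal.ofReal '' {s : ℝ | 0 < s ∧ ∃ M : ℝ, 0 < M ∧
    ∀ P : Polynomial ℂ, 1 ≤ P.natDegree →
      q (dIter k P) ≤ M * (P.natDegree : ℝ) ^ s * q P})

/-- The norm `q_{m,s}(P) = ∑_{r=0}^∞ ‖P^{(rs)}‖₀ / ((rs)!)^m` (the sum is finite, since
`P^{(rs)} = 0` once `rs > deg P`). -/
noncomputable def qms (q0 : Polynomial ℂ → ℝ) (m : ℝ) (s : ℕ) (P : Polynomial ℂ) : ℝ :=
  ∑' r : ℕ, q0 (dIter (r * s) P) / ((r * s).factorial : ℝ) ^ m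

/-- `q0` is a seminorm on `ℂ[X]`. -/
structure IsPolySeminorm (q0 : Polynomial ℂ → ℝ) : Prop where
  nonneg : ∀ P, 0 ≤ q0 P
  triangle : ∀ P Q, q0 (P + Q) ≤ q0 P + q0 Q
  homog : ∀ (c : ℂ) (P), q0 (c • P) = ‖c‖ * q0 P

theorem aux_zero (q0 : Polynomial ℂ → ℝ) (hq0 : IsPolySeminorm q0) (P : Polynomial ℂ) (k : ℕ)
    (hk : P.natDegree < k) : q0 (dIter k P) = 0 := by
  have h : dIter k P = 0 := Polynomial.iterate_derivative_eq_zero hk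
  have h2 := hq0.homog 0 0
  rw [h]
  simpa using h2

theorem aux_add (a b : ℕ) (P : Polynomial ℂ) : dIter a (dIter b P) = dIter (a + b) P := by
  unfold dIter
  rw [Function.iterate_add_apply]

theorem aux_summable (q0 : Polynomial ℂ → ℝ) (hq0 : IsPolySeminorm q0) (m : ℝ) (s : ℕ)
    (hs : 1 ≤ s) (u : ℕ) (P : Polynomial ℂ) :
    Summable (fun r : ℕ => q0 (dIter ((r + u) * s) P) / ((r * s).factorial : ℝ) ^ m) := by
  apply summable_of_ne_finset_zero (s := Finset.range (P.natDegree + 1))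
  intro r hr
  rw [Finset.mem_range, not_lt] at hr
  rw [aux_zero q0 hq0, zero_div]
  nlinarith

theorem aux_key (q0 : Polynomial ℂ → ℝ) (hq0 : IsPolySeminorm q0) (m : ℝ) (hm : 0 < m) (s : ℕ)
    (hs : 1 ≤ s) (u : ℕ) (P : Polynomial ℂ) :
    ∑' r : ℕ, q0 (dIter ((r + u) * s) P) / ((r * s).factorial : ℝ) ^ m ≤
      (P.natDegree : ℝ) ^ ((s : ℝ) * (u : ℝ) * m) * qms q0 m s P := by
  have hsum := aux_summable q0 hq0 m s hs 0 P
  simp only [add_zero] at hsum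
  have hinj : Function.Injective (fun r : ℕ => r + u) := fun a b h => by simpa using h
  have hnn : ∀ r : ℕ, 0 ≤ q0 (dIter (r * s) P) / ((r * s).factorial : ℝ) ^ m := fun r =>
    div_nonneg (hq0.nonneg _) (by positivity)
  have hsum2 := hsum.comp_injective hinj
  have hle : ∑' r : ℕ, q0 (dIter ((r + u) * s) P) / (((r + u) * s).factorial : ℝ) ^ m
      ≤ qms q0 m s P :=
    tsum_comp_le_tsum_of_inj hsum hnn hinj
  refine le_trans ?_ (mul_le_mul_of_nonneg_left hle (by positivity))
  rw [← tsum_mul_left]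
  refine (aux_summable q0 hq0 m s hs u P).tsum_le_tsum (fun r => ?_) (hsum2.mul_left _)
  by_cases hk : P.natDegree < (r + u) * s
  · simp [aux_zero q0 hq0 P _ hk]
  push Not at hk
  have hfac : ((r + u) * s).factorial ≤ (r * s).factorial * P.natDegree ^ (s * u) := by
    have e : (r + u) * s = r * s + s * u := by ring
    rw [e] at hk ⊢
    rw [← Nat.factorial_mul_ascFactorial]
    exact Nat.mul_le_mul_left _ ((Nat.ascFactorial_le_pow_add _ _).trans
      (Nat.pow_le_pow_left hk _))
  have hfac' : (((r + u) * s).factorial : ℝ) ^ m ≤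
      ((r * s).factorial : ℝ) ^ m * (P.natDegree : ℝ) ^ ((s : ℝ) * (u : ℝ) * m) := by
    have : (((r + u) * s).factorial : ℝ) ≤ (r * s).factorial * (P.natDegree : ℝ) ^ (s * u) := by
      exact_mod_cast hfac
    calc _ ≤ (((r * s).factorial : ℝ) * (P.natDegree : ℝ) ^ (s * u)) ^ m :=
          Real.rpow_le_rpow (by positivity) this hm.le
      _ = _ := by
          rw [Real.mul_rpow (by positivity) (by positivity), Real.rpow_mul (by positivity)]
          congr 2
          rw [← Real.rpow_natCast]
          push_cast
          rfl
  have p1 : (0 : ℝ) < (((r + u) * s).factorial : ℝ) ^ m :=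
    Real.rpow_pos_of_pos (by exact_mod_cast Nat.factorial_pos _) _
  have p2 : (0 : ℝ) < ((r * s).factorial : ℝ) ^ m :=
    Real.rpow_pos_of_pos (by exact_mod_cast Nat.factorial_pos _) _
  rw [← mul_div_assoc, div_le_div_iff₀ p2 p1]
  have := mul_le_mul_of_nonneg_left hfac' (hq0.nonneg (dIter ((r + u) * s) P))
  linarith

theorem aux_first (q0 : Polynomial ℂ → ℝ) (hq0 : IsPolySeminorm q0)
    (m : ℝ) (hm : 0 < m) (s : ℕ) (hs : 1 ≤ s)
    (A B : ℝ) (hA : 0 < A) (hB : 0 < B)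
    (hAB : ∀ (P : Polynomial ℂ) (j : ℕ), 1 ≤ j → j ≤ s →
      q0 (dIter j P) ≤ A * q0 P + B * q0 (dIter s P))
    (t j : ℕ) (hj1 : 1 ≤ j) (hj : j ≤ s) (P : Polynomial ℂ) (hP : 1 ≤ P.natDegree) :
      qms q0 m s (dIter (s * t + j) P) ≤
        (A + max B 1) * (P.natDegree : ℝ) ^ ((s : ℝ) * ((t : ℝ) + 1) * m) * qms q0 m s P := by
  have hS1 := aux_summable q0 hq0 m s hs t P
  have hS2 := aux_summable q0 hq0 m s hs (t + 1) P
  have hS := aux_summable q0 hq0 m s hs 0 (dIter (s * t + j) P)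
  simp only [add_zero] at hS
  have k1 := aux_key q0 hq0 m hm s hs t P
  have k2 := aux_key q0 hq0 m hm s hs (t + 1) P
  have hq : 0 ≤ qms q0 m s P := tsum_nonneg fun r =>
    div_nonneg (hq0.nonneg _) (by positivity)
  have h1 : qms q0 m s (dIter (s * t + j) P) ≤
      A * (∑' r : ℕ, q0 (dIter ((r + t) * s) P) / ((r * s).factorial : ℝ) ^ m) +
      B * (∑' r : ℕ, q0 (dIter ((r + (t + 1)) * s) P) / ((r * s).factorial : ℝ) ^ m) := by
    rw [← tsum_mul_left, ← tsum_mul_left, ← (hS1.mul_left A).tsum_add (hS2.mul_left B)]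
    refine hS.tsum_le_tsum (fun r => ?_) ((hS1.mul_left A).add (hS2.mul_left B))
    rw [← mul_div_assoc, ← mul_div_assoc, ← add_div]
    refine div_le_div_of_nonneg_right ?_ (by positivity)
    have := hAB (dIter ((r + t) * s) P) j hj1 hj
    rw [aux_add, aux_add] at this
    rw [aux_add]
    have e1 : r * s + (s * t + j) = j + (r + t) * s := by ring
    have e2 : (r + (t + 1)) * s = s + (r + t) * s := by ring
    rw [e1, e2]
    exact this
  have hpow : (P.natDegree : ℝ) ^ ((s : ℝ) * (t : ℝ) * m) ≤
      (P.natDegree : ℝ) ^ ((s : ℝ) * ((t : ℝ) + 1) * m) := by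
    apply Real.rpow_le_rpow_of_exponent_le (by exact_mod_cast hP)
    gcongr
    linarith
  push_cast at k2
  have k1' := k1.trans (mul_le_mul_of_nonneg_right hpow hq)
  have hX : 0 ≤ (P.natDegree : ℝ) ^ ((s : ℝ) * ((t : ℝ) + 1) * m) * qms q0 m s P := by positivity
  have e1 := mul_le_mul_of_nonneg_left k1' hA.le
  have e2 := mul_le_mul_of_nonneg_left k2 hB.le
  have e3 := mul_le_mul_of_nonneg_right (le_max_left B 1) hX
  rw [mul_assoc, add_mul]
  linarith

/-- Let `‖·‖₀` be a seminorm on `ℂ[X]`, `m > 0`, `s ≥ 1` an integer, and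
suppose `‖P^{(j)}‖₀ ≤ A ‖P‖₀ + B ‖P^{(s)}‖₀` for all `P` and `j ∈ {1,…,s}`. Then for all
`t ∈ ℕ`, `j ∈ {1,…,s}` and `P` with `deg P ≥ 1`,
`q_{m,s}(P^{(st+j)}) ≤ (A + max(B,1)) (deg P)^{s(t+1)m} q_{m,s}(P)`;
consequently `m_k(q_{m,s}) ≤ s m ⌈k/s⌉` for every `k ≥ 1`. -/
theorem statement7 (q0 : Polynomial ℂ → ℝ) (hq0 : IsPolySeminorm q0)
    (m : ℝ) (hm : 0 < m) (s : ℕ) (hs : 1 ≤ s)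
    (A B : ℝ) (hA : 0 < A) (hB : 0 < B)
    (hAB : ∀ (P : Polynomial ℂ) (j : ℕ), 1 ≤ j → j ≤ s →
      q0 (dIter j P) ≤ A * q0 P + B * q0 (dIter s P)) :
    (∀ (t j : ℕ), 1 ≤ j → j ≤ s → ∀ P : Polynomial ℂ, 1 ≤ P.natDegree →
      qms q0 m s (dIter (s * t + j) P) ≤
        (A + max B 1) * (P.natDegree : ℝ) ^ ((s : ℝ) * ((t : ℝ) + 1) * m) * qms q0 m s P) ∧
    ∀ k : ℕ, 1 ≤ k →
      mkPoly (qms q0 m s) k ≤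
        ENNReal.ofReal ((s : ℝ) * m * (⌈(k : ℝ) / (s : ℝ)⌉₊ : ℝ)) := by
  have H := aux_first q0 hq0 m hm s hs A B hA hB hAB
  refine ⟨H, fun k hk => ?_⟩
  have hs0 : (0 : ℝ) < s := by exact_mod_cast hs
  have hk0 : (0 : ℝ) < k := by exact_mod_cast hk
  have hdiv := Nat.div_add_mod (k - 1) s
  have hmod := Nat.mod_lt (k - 1) hs
  set t := (k - 1) / s
  set i := (k - 1) % s
  have hk' : k = s * t + (i + 1) := by omega
  have hceil : ⌈(k : ℝ) / (s : ℝ)⌉₊ = t + 1 := by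
    rw [Nat.ceil_eq_iff (Nat.succ_ne_zero t)]
    have hi : (i : ℝ) + 1 ≤ s := by exact_mod_cast hmod
    have hi0 : (0 : ℝ) ≤ i := by positivity
    have hkr : (k : ℝ) = s * t + (i + 1) := by exact_mod_cast hk'
    rw [lt_div_iff₀ hs0, div_le_iff₀ hs0]
    push_cast [Nat.add_sub_cancel]
    constructor <;> nlinarith
  apply sInf_le
  refine ⟨_, ⟨?_, A + max B 1, ?_, fun P hP => ?_⟩, rfl⟩
  · rw [hceil]; positivity
  · have := le_max_right B 1
    linarith
  · have := H t (i + 1) (Nat.le_add_left 1 i) hmod P hP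
    rw [← hk'] at this
    rw [hceil]
    convert this using 4
    push_cast
    ring
end

section
/- Let E ⊂ ℂ be a compact set, μ a Borel probability measure on ℂ with support contained in E, and (P̂_n)_{n≥0} a sequence of polynomials with deg P̂_n = n that is orthonormal in L²(μ). Assume limsup_{n→∞} (log ‖P̂_n‖_E)/(log n) = α < ∞. Define m_k(𝒫̂) = limsup_{n→∞} log(‖P̂_n^{(k)}‖_E / ‖P̂_n‖_E)/(log n) for k ≥ 1 and m*(𝒫̂) = limsup_{k→∞} m_k(𝒫̂)/k. Then m(E) = m*(𝒫̂), as an equality in [0,∞]. -/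
open Polynomial Filter
open scoped ENNReal

open MeasureTheory

/-- The supremum norm `‖P‖_E = sup_{z ∈ E} |P(z)|` on polynomials in one complex variable. -/
noncomputable def supC (E : Set ℂ) (P : Polynomial ℂ) : ℝ :=
  ⨆ z : E, ‖P.eval (z : ℂ)‖

/-- `m_k(𝒫̂) = limsup_{n→∞} log(‖P̂_n^{(k)}‖_E / ‖P̂_n‖_E) / log n`, as an extended real. -/
noncomputable def mkSeq (E : Set ℂ) (Phat : ℕ → Polynomial ℂ) (k : ℕ) : EReal :=
  Filter.atTop.limsup fun n : ℕ =>
    ((Real.log (supC E (dIter k (Phat n)) / supC E (Phat n)) / Real.log n : ℝ) : EReal)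

/-- The asymptotic exponent `m*(𝒫̂) = limsup_{k→∞} m_k(𝒫̂)/k`. -/
noncomputable def mStarSeq (E : Set ℂ) (Phat : ℕ → Polynomial ℂ) : EReal :=
  Filter.atTop.limsup fun k : ℕ => (((k : ℝ)⁻¹ : ℝ) : EReal) * mkSeq E Phat k

section lemmas

lemma supC_bdd {E : Set ℂ} (hE : IsCompact E) (P : Polynomial ℂ) :
    BddAbove (Set.range fun z : E => ‖P.eval (z : ℂ)‖) := by
  have h := (hE.image (f := fun z => ‖P.eval z‖) (by fun_prop)).bddAbove
  rwa [Set.image_eq_range] at h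

lemma le_supC {E : Set ℂ} (hE : IsCompact E) (P : Polynomial ℂ) {z : ℂ} (hz : z ∈ E) :
    ‖P.eval z‖ ≤ supC E P :=
  le_ciSup (f := fun z : E => ‖P.eval (z : ℂ)‖) (supC_bdd hE P) ⟨z, hz⟩

lemma supC_le {E : Set ℂ} (hne : E.Nonempty) (P : Polynomial ℂ) {b : ℝ}
    (h : ∀ z ∈ E, ‖P.eval z‖ ≤ b) : supC E P ≤ b := by
  have := hne.to_subtype
  exact ciSup_le fun z => h z z.2

lemma supC_nonneg (E : Set ℂ) (P : Polynomial ℂ) : 0 ≤ supC E P :=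
  Real.iSup_nonneg fun _ => norm_nonneg _

lemma dIter_eq (k : ℕ) (P : Polynomial ℂ) : dIter k P = Polynomial.derivative^[k] P := rfl

lemma dIter_zero_of_lt (k : ℕ) (P : Polynomial ℂ) (h : P.natDegree < k) : dIter k P = 0 := by
  rw [dIter_eq]; exact Polynomial.iterate_derivative_eq_zero h

lemma supC_zero (E : Set ℂ) : supC E 0 = 0 := by
  simp [supC]

/-- Markov's inequality of order k with exponent s. -/
def Mk (E : Set ℂ) (k : ℕ) (s : ℝ) : Prop := ∃ M : ℝ, 0 < M ∧
    ∀ P : Polynomial ℂ, 1 ≤ P.natDegree →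
      supC E (dIter k P) ≤ M * (P.natDegree : ℝ) ^ s * supC E P

lemma dIter_pow_eval (k : ℕ) (P : Polynomial ℂ) (z : ℂ) :
    (dIter k ((P - C (P.eval z)) ^ k)).eval z = k.factorial * (P.derivative.eval z) ^ k := by
  rw [dIter_eq, ← Polynomial.factorial_smul_hasseDeriv]
  obtain ⟨R, hR⟩ : (X - C z) ∣ (P - C (P.eval z)) := by
    rw [dvd_iff_isRoot]; simp
  have h1 : P.derivative.eval z = R.eval z := by
    have : P = (X - C z) * R + C (P.eval z) := by rw [← hR]; ring
    rw [this]; simp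
  rw [h1, hR]
  have h2 : ((hasseDeriv k) (((X - C z) * R) ^ k)).eval z = R.eval z ^ k := by
    rw [← taylor_coeff, mul_pow, taylor_mul, taylor_pow, taylor_pow]
    simp [coeff_X_pow_mul']
    simp [coeff_zero_eq_eval_zero, taylor_apply]
  rw [LinearMap.smul_apply, nsmul_eq_mul, eval_mul, eval_natCast, h2]

lemma Mk_one {E : Set ℂ} (hE : IsCompact E) (hne : E.Nonempty) {k : ℕ} (hk : 1 ≤ k) {s : ℝ}
    (h : Mk E k (s * k)) : Mk E 1 s := by
  obtain ⟨M, hM, h⟩ := h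
  have hk0 : (0:ℝ) < k := by exact_mod_cast hk
  refine ⟨M ^ ((k:ℝ)⁻¹) * (k:ℝ) ^ s * 2, by positivity, fun P hP => ?_⟩
  refine supC_le hne _ fun z hz => ?_
  set Q := P - C (P.eval z) with hQ
  have hdQ : Q.natDegree = P.natDegree := by rw [hQ, natDegree_sub_C]
  have hQs : supC E (Q ^ k) ≤ (2 * supC E P) ^ k := by
    refine supC_le hne _ fun w hw => ?_
    rw [eval_pow, norm_pow]
    gcongr
    rw [hQ]; simp only [eval_sub, eval_C]
    calc _ ≤ ‖eval w P‖ + ‖eval z P‖ := norm_sub_le _ _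
      _ ≤ _ := by linarith [le_supC hE P hw, le_supC hE P hz]
  have h1 := h (Q ^ k) (by rw [natDegree_pow, hdQ]; exact Nat.mul_pos hk hP)
  have h2 := le_supC hE (dIter k (Q ^ k)) hz
  rw [hQ, dIter_pow_eval, ← hQ, norm_mul, norm_pow] at h2
  rw [natDegree_pow, hdQ] at h1
  have h3 : (1:ℝ) ≤ ‖(k.factorial : ℂ)‖ := by
    rw [Complex.norm_natCast]; exact_mod_cast Nat.succ_le_of_lt k.factorial_pos
  have hS := supC_nonneg E P
  have hn : (0:ℝ) < P.natDegree := by exact_mod_cast hP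
  have h4 : ‖eval z (derivative P)‖ ^ k ≤
      (M ^ ((k:ℝ)⁻¹) * (k:ℝ) ^ s * 2 * (P.natDegree:ℝ) ^ s * supC E P) ^ k := by
    calc _ ≤ ‖(k.factorial : ℂ)‖ * ‖eval z (derivative P)‖ ^ k :=
          le_mul_of_one_le_left (by positivity) h3
      _ ≤ _ := h2
      _ ≤ _ := h1
      _ ≤ M * ((k * P.natDegree : ℕ):ℝ) ^ (s * k) * (2 * supC E P) ^ k := by gcongr
      _ = _ := by
        push_cast
        rw [Real.mul_rpow hk0.le hn.le, Real.rpow_mul hk0.le, Real.rpow_mul hn.le,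
          Real.rpow_natCast, Real.rpow_natCast]
        simp only [mul_pow]
        rw [← Real.rpow_natCast (M ^ _), ← Real.rpow_mul hM.le, inv_mul_cancel₀ hk0.ne',
          Real.rpow_one]
        ring
  exact le_of_pow_le_pow_left₀ (by omega) (by positivity) h4

lemma Mk_one_le {E : Set ℂ} (hE : IsCompact E) (hne : E.Nonempty) {s : ℝ}
    (h : Mk E 1 s) : 1 ≤ s := by
  obtain ⟨M, hM, h⟩ := h
  obtain ⟨z0, hz0⟩ := hne
  obtain ⟨z, hz, hmax⟩ := hE.exists_isMaxOn (f := fun z => ‖z - (z0 + 1)‖) ⟨z0, hz0⟩ (by fun_prop)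
  set c := z0 + 1 with hc
  set R := ‖z - c‖ with hR
  have hRpos : 0 < R := by
    have := hmax hz0
    simp [hc] at this
    rw [hR, hc]; linarith
  by_contra! hs
  have key : ∀ n : ℕ, 1 ≤ n → (n:ℝ) ^ (1 - s) ≤ M * R := by
    intro n hn
    have hn0 : (0:ℝ) < n := by exact_mod_cast hn
    have h1 := h ((X - C c) ^ n) (by rw [natDegree_pow, natDegree_X_sub_C]; omega)
    rw [natDegree_pow, natDegree_X_sub_C, mul_one] at h1
    have h2 : supC E ((X - C c) ^ n) ≤ R ^ n := by
      refine supC_le ⟨z0, hz0⟩ _ fun w hw => ?_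
      have := hmax hw
      simp only [eval_pow, norm_pow, eval_sub, eval_X, eval_C]
      gcongr
      exact this
    have h3 := le_supC hE (dIter 1 ((X - C c) ^ n)) hz
    have h4 : ‖(dIter 1 ((X - C c) ^ n)).eval z‖ = n * R ^ (n - 1) := by
      simp [dIter, derivative_X_sub_C_pow, hR]
    rw [h4] at h3
    have h5 : (n:ℝ) * R ^ (n-1) ≤ M * (n:ℝ) ^ s * R ^ n := by
      refine h3.trans (h1.trans ?_); gcongr
    have h6 : R ^ n = R ^ (n-1) * R := by rw [← pow_succ]; congr 1; omega
    rw [h6] at h5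
    have h7 : (n:ℝ) ≤ M * (n:ℝ) ^ s * R := by
      have : 0 < R ^ (n-1) := by positivity
      refine le_of_mul_le_mul_right ?_ this
      linarith
    rw [Real.rpow_sub hn0, Real.rpow_one, div_le_iff₀ (by positivity)]
    linarith
  have ht : Tendsto (fun n : ℕ => (n:ℝ) ^ (1 - s)) atTop atTop :=
    (tendsto_rpow_atTop (by linarith)).comp tendsto_natCast_atTop_atTop
  obtain ⟨n, hn, hn1⟩ := ((ht.eventually_gt_atTop (M * R)).and (eventually_ge_atTop 1)).exists
  exact absurd (key n hn1) (not_le.2 hn)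

lemma Mk_iter {E : Set ℂ} {s M : ℝ} (hs : 0 < s) (hM : 1 ≤ M)
    (h : ∀ P : Polynomial ℂ, 1 ≤ P.natDegree →
      supC E (dIter 1 P) ≤ M * (P.natDegree : ℝ) ^ s * supC E P) (k : ℕ) (P : Polynomial ℂ) 
    (hP : 1 ≤ P.natDegree) : 
    supC E (dIter k P) ≤ (M * (P.natDegree:ℝ) ^ s) ^ k * supC E P := by
  induction k with
  | zero => simp [dIter]
  | succ k ih =>
    have e : dIter (k+1) P = dIter 1 (dIter k P) := by
      simp [dIter, Function.iterate_succ_apply']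
    have hS := supC_nonneg E P
    have hS' := supC_nonneg E (dIter k P)
    rw [e]
    by_cases hd : 1 ≤ (dIter k P).natDegree
    · refine (h _ hd).trans ?_
      have hle : (dIter k P).natDegree ≤ P.natDegree := by
        rw [dIter_eq]
        exact (natDegree_iterate_derivative P k).trans (Nat.sub_le _ _)
      calc _ ≤ M * (P.natDegree:ℝ) ^ s * supC E (dIter k P) := by gcongr
        _ ≤ M * (P.natDegree:ℝ) ^ s * ((M * (P.natDegree:ℝ) ^ s) ^ k * supC E P) := by gcongr
        _ = _ := by ring
    · rw [dIter_zero_of_lt 1 _ (by omega), supC_zero]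
      positivity

lemma expand {Phat : ℕ → Polynomial ℂ} (hdeg : ∀ n, (Phat n).natDegree = n)
    (h0 : ∀ n, Phat n ≠ 0) (n : ℕ) : ∀ P : Polynomial ℂ, P.natDegree < n →
    ∃ a : ℕ → ℂ, P = ∑ j ∈ Finset.range n, C (a j) * Phat j := by
  induction n with
  | zero => intro P hP; omega
  | succ n ih =>
    intro P hP
    have hl : (Phat n).leadingCoeff ≠ 0 := leadingCoeff_ne_zero.2 (h0 n)
    set b := P.coeff n / (Phat n).leadingCoeff with hb
    set Q := P - C b * Phat n with hQ
    have hQc : Q.coeff n = 0 := by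
      have : (Phat n).coeff n = (Phat n).leadingCoeff := by rw [leadingCoeff, hdeg]
      rw [hQ, coeff_sub, coeff_C_mul, this, hb]; field_simp; ring
    have hQd : Q.natDegree ≤ n := by
      refine (natDegree_sub_le _ _).trans (max_le (by omega) ?_)
      exact (natDegree_C_mul_le _ _).trans (hdeg n).le
    rcases Nat.eq_zero_or_pos n with hn | hn
    · subst hn
      refine ⟨fun _ => b, ?_⟩
      have : Q = 0 := by rw [eq_C_of_natDegree_le_zero hQd, hQc, C_0]
      simp
      exact sub_eq_zero.1 this
    · have hlt : Q.natDegree < n := by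
        rcases hQd.lt_or_eq with h | h
        · exact h
        · exfalso
          have : Q.leadingCoeff = 0 := by rw [leadingCoeff, h, hQc]
          rw [leadingCoeff_eq_zero] at this
          rw [this] at h; simp at h; omega
      obtain ⟨a, ha⟩ := ih Q hlt
      refine ⟨fun j => if j = n then b else a j, ?_⟩
      rw [Finset.sum_range_succ]
      have : ∑ x ∈ Finset.range n, C (if x = n then b else a x) * Phat x =
          ∑ x ∈ Finset.range n, C (a x) * Phat x := by
        refine Finset.sum_congr rfl fun x hx => ?_
        rw [if_neg (Finset.mem_range.1 hx).ne]
      simp only [this, ← ha, hQ]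
      simp

lemma integ {E : Set ℂ} (hE : IsCompact E) (μ : Measure ℂ) [IsProbabilityMeasure μ]
    (hsupp : μ Eᶜ = 0) {F : Type*} [NormedAddCommGroup F] [SecondCountableTopology F]
    (f : ℂ → F) (hf : Continuous f) : Integrable f μ := by
  obtain ⟨B, hB⟩ := hE.exists_bound_of_continuousOn hf.continuousOn
  refine Integrable.of_bound hf.aestronglyMeasurable B ?_
  have : ∀ᵐ z ∂μ, z ∈ E := mem_ae_iff.2 hsupp
  filter_upwards [this] with z hz using hB z hz

lemma sq_int {μ : Measure ℂ} {Q : Polynomial ℂ}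
    (h : ∫ z, Q.eval z * (starRingEnd ℂ) (Q.eval z) ∂μ = 1) :
    ∫ z, ‖Q.eval z‖ ^ 2 ∂μ = 1 := by
  have h2 : ∫ z, ((‖Q.eval z‖ ^ 2 : ℝ) : ℂ) ∂μ = 1 := by
    rw [← h]; congr 1; ext z
    rw [Complex.mul_conj, Complex.normSq_eq_norm_sq]
  rw [integral_complex_ofReal] at h2
  exact_mod_cast h2

lemma supC_pos {E : Set ℂ} (hE : IsCompact E) {μ : Measure ℂ}
    (hsupp : μ Eᶜ = 0) {Q : Polynomial ℂ}
    (h : ∫ z, Q.eval z * (starRingEnd ℂ) (Q.eval z) ∂μ = 1) : 0 < supC E Q := by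
  refine (supC_nonneg E Q).lt_of_ne fun h0 => ?_
  have : ∀ᵐ z ∂μ, z ∈ E := mem_ae_iff.2 hsupp
  have h1 : ∫ z, Q.eval z * (starRingEnd ℂ) (Q.eval z) ∂μ = 0 := by
    apply integral_eq_zero_of_ae
    filter_upwards [this] with z hz
    have := le_supC hE Q hz
    rw [← h0, norm_le_zero_iff] at this
    simp [this]
  rw [h] at h1; exact one_ne_zero h1

lemma coeff_bound {E : Set ℂ} (hE : IsCompact E) {μ : Measure ℂ} [IsProbabilityMeasure μ]
    (hsupp : μ Eᶜ = 0) {Phat : ℕ → Polynomial ℂ} 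
    (horth : ∀ i j : ℕ,
      ∫ z, (Phat i).eval z * (starRingEnd ℂ) ((Phat j).eval z) ∂μ =
        if i = j then 1 else 0) (n : ℕ) (a : ℕ → ℂ) (P : Polynomial ℂ)
    (hP : P = ∑ j ∈ Finset.range n, C (a j) * Phat j) (j : ℕ) (hj : j < n) :
    ‖a j‖ ≤ supC E P := by
  have hE' : ∀ᵐ z ∂μ, z ∈ E := mem_ae_iff.2 hsupp
  have h1 : ∫ z, P.eval z * (starRingEnd ℂ) ((Phat j).eval z) ∂μ = a j := by
    have : ∀ z, P.eval z * (starRingEnd ℂ) ((Phat j).eval z) =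
        ∑ i ∈ Finset.range n, a i * ((Phat i).eval z * (starRingEnd ℂ) ((Phat j).eval z)) := by
      intro z
      rw [hP, eval_finsetSum, Finset.sum_mul]
      refine Finset.sum_congr rfl fun i _ => ?_
      simp; ring
    simp_rw [this]
    rw [integral_finsetSum]
    · simp_rw [integral_const_mul, horth]
      simp; intro h; omega
    · intro i _
      exact integ hE μ hsupp _ (by fun_prop)
  rw [← h1]
  have hsq := sq_int (μ := μ) (Q := Phat j) (by rw [horth]; simp)
  have hS := supC_nonneg E P
  calc _ ≤ ∫ z, ‖P.eval z * (starRingEnd ℂ) ((Phat j).eval z)‖ ∂μ :=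
        norm_integral_le_integral_norm _
    _ ≤ ∫ z, supC E P * ((1 + ‖(Phat j).eval z‖ ^ 2) / 2) ∂μ := by
        refine integral_mono_ae (integ hE μ hsupp _ (by fun_prop))
          (integ hE μ hsupp _ (by fun_prop)) ?_
        filter_upwards [hE'] with z hz
        rw [norm_mul, RCLike.norm_conj]
        have := le_supC hE P hz
        gcongr
        nlinarith [sq_nonneg (‖(Phat j).eval z‖ - 1)]
    _ = supC E P := by
        rw [integral_const_mul, integral_div, integral_add (integ hE μ hsupp _ (by fun_prop))
          (integ hE μ hsupp _ (by fun_prop)), hsq]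
        simp

lemma log_bound {x : ℝ} (hx : 0 ≤ x) {n : ℕ} (hn : 2 ≤ n) {a : ℝ}
    (h : Real.log x / Real.log n < a) : x ≤ (n:ℝ) ^ a := by
  have hn' : (1:ℝ) < n := by exact_mod_cast hn
  have hl := Real.log_pos hn'
  rw [div_lt_iff₀ hl] at h
  rcases hx.eq_or_lt with h0 | h0
  · rw [← h0]; positivity
  · rw [Real.rpow_def_of_pos (by linarith), mul_comm, ← Real.log_le_iff_le_exp h0]
    exact h.le

lemma dIter_sum (k : ℕ) (s : Finset ℕ) (a : ℕ → ℂ) (Q : ℕ → Polynomial ℂ) :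
    dIter k (∑ j ∈ s, C (a j) * Q j) = ∑ j ∈ s, C (a j) * dIter k (Q j) := by
  simp only [dIter_eq, iterate_derivative_sum, iterate_derivative_C_mul]

lemma Mk_of_lt {E : Set ℂ} (hE : IsCompact E) (hne : E.Nonempty)
    (μ : Measure ℂ) [IsProbabilityMeasure μ] (hsupp : μ Eᶜ = 0)
    (Phat : ℕ → Polynomial ℂ) (hdeg : ∀ n, (Phat n).natDegree = n)
    (horth : ∀ i j : ℕ,
      ∫ z, (Phat i).eval z * (starRingEnd ℂ) ((Phat j).eval z) ∂μ =
        if i = j then 1 else 0)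
    (hα : Filter.atTop.limsup
        (fun n : ℕ => ((Real.log (supC E (Phat n)) / Real.log n : ℝ) : EReal)) < ⊤)
    {t : ℝ} (ht : 0 ≤ t) (hm : mStarSeq E Phat < t) {ε : ℝ} (hε : 0 < ε) :
    Mk E 1 (t + ε) := by
  have hpos : ∀ n, 0 < supC E (Phat n) := fun n =>
    supC_pos hE hsupp (by rw [horth]; simp)
  have h0 : ∀ n, Phat n ≠ 0 := by
    intro n hn
    have := hpos n
    rw [hn, supC_zero] at this
    exact lt_irrefl _ this
  obtain ⟨a, ha⟩ : ∃ a : ℝ, 0 ≤ a ∧ ∀ᶠ n : ℕ in atTop, supC E (Phat n) ≤ (n:ℝ) ^ a := by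
    obtain ⟨a, ha, -⟩ := EReal.lt_iff_exists_real_btwn.1 hα
    refine ⟨max a 0, le_max_right _ _, ?_⟩
    filter_upwards [eventually_lt_of_limsup_lt ha, eventually_ge_atTop 2] with n hn hn2
    have hn1 : (1:ℝ) ≤ n := by exact_mod_cast (by omega : 1 ≤ n)
    exact (log_bound (hpos n).le hn2 (EReal.coe_lt_coe_iff.1 hn)).trans
      (Real.rpow_le_rpow_of_exponent_le hn1 (le_max_left _ _))
  obtain ⟨ha0, ha⟩ := ha
  have hk := eventually_lt_of_limsup_lt hm
  have hk2 : ∀ᶠ k : ℕ in atTop, (a + 1) / ε ≤ k :=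
    tendsto_natCast_atTop_atTop.eventually_ge_atTop _
  obtain ⟨k, ⟨hk, hk2⟩, hk1⟩ := ((hk.and hk2).and (eventually_ge_atTop 1)).exists
  have hk0 : (0:ℝ) < k := by exact_mod_cast hk1
  rw [div_le_iff₀ hε] at hk2
  apply Mk_one hE hne hk1
  have hks : mkSeq E Phat k < ((t * k : ℝ) : EReal) := by
    by_contra! hc
    have h1 : (((k : ℝ)⁻¹ : ℝ) : EReal) * ((t * k : ℝ) : EReal) ≤
        (((k : ℝ)⁻¹ : ℝ) : EReal) * mkSeq E Phat k := by
      apply mul_le_mul_of_nonneg_left hc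
      exact_mod_cast (inv_pos.2 hk0).le
    rw [← EReal.coe_mul] at h1
    have h2 : (k:ℝ)⁻¹ * (t * k) = t := by field_simp
    rw [h2] at h1
    exact absurd hk (not_lt.2 h1)
  have hev : ∀ᶠ n : ℕ in atTop, supC E (dIter k (Phat n)) ≤ (n:ℝ) ^ (t * k + a) := by
    filter_upwards [eventually_lt_of_limsup_lt hks, eventually_ge_atTop 2, ha] with n hn hn2 han
    have hn1 : (0:ℝ) < n := by exact_mod_cast (by omega : 0 < n)
    have := log_bound (div_nonneg (supC_nonneg _ _) (hpos n).le) hn2 (EReal.coe_lt_coe_iff.1 hn)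
    rw [div_le_iff₀ (hpos n)] at this
    refine this.trans ?_
    rw [Real.rpow_add hn1]
    gcongr
  obtain ⟨N, hN⟩ := eventually_atTop.1 hev
  set e := t * k + a with he
  have he0 : 0 ≤ e := by positivity
  set D := ∑ j ∈ Finset.range N, supC E (dIter k (Phat j)) with hD
  have hD0 : 0 ≤ D := Finset.sum_nonneg fun j _ => supC_nonneg _ _
  have hall : ∀ j : ℕ, supC E (dIter k (Phat j)) ≤ D + (j:ℝ) ^ e := by
    intro j
    by_cases hj : j < N
    · have : supC E (dIter k (Phat j)) ≤ D :=
        Finset.single_le_sum (f := fun j => supC E (dIter k (Phat j)))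
          (fun j _ => supC_nonneg _ _) (Finset.mem_range.2 hj)
      have : (0:ℝ) ≤ (j:ℝ) ^ e := by positivity
      linarith
    · have := hN j (by omega)
      linarith
  refine ⟨2 * (D + 1), by positivity, fun P hP => ?_⟩
  set n := P.natDegree with hn
  have hn1 : (1:ℝ) ≤ n := by exact_mod_cast hP
  obtain ⟨c, hc⟩ := expand hdeg h0 (n + 1) P (by omega)
  have hcb := coeff_bound hE hsupp horth (n + 1) c P hc
  have hS := supC_nonneg E P
  have hone : (1:ℝ) ≤ (n:ℝ) ^ e := Real.one_le_rpow hn1 he0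
  refine supC_le hne _ fun z hz => ?_
  have hz1 : ‖(dIter k P).eval z‖ ≤ (n + 1) * (supC E P * (D + (n:ℝ) ^ e)) := by
    conv_lhs => rw [hc]
    rw [dIter_sum, eval_finsetSum]
    calc _ ≤ ∑ j ∈ Finset.range (n + 1), ‖(C (c j) * dIter k (Phat j)).eval z‖ := norm_sum_le _ _
      _ ≤ ∑ j ∈ Finset.range (n + 1), supC E P * (D + (n:ℝ) ^ e) := by
        refine Finset.sum_le_sum fun j hj => ?_
        rw [Finset.mem_range] at hj
        rw [eval_mul, eval_C, norm_mul]
        have h1 := hcb j hj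
        have h2 : (j:ℝ) ^ e ≤ (n:ℝ) ^ e := by
          have : (j:ℝ) ≤ n := by exact_mod_cast (by omega : j ≤ n)
          gcongr
        have h3 := (le_supC hE (dIter k (Phat j)) hz).trans ((hall j).trans (by linarith : _ ≤ D + (n:ℝ) ^ e))
        gcongr
      _ = _ := by simp
  refine hz1.trans ?_
  have h4 : (n:ℝ) ^ (e + 1) ≤ (n:ℝ) ^ ((t + ε) * k) :=
    Real.rpow_le_rpow_of_exponent_le hn1 (by rw [he]; linarith)
  calc ((n:ℝ) + 1) * (supC E P * (D + (n:ℝ) ^ e))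
      ≤ (2 * n) * (supC E P * ((D + 1) * (n:ℝ) ^ e)) := by
        gcongr
        · linarith
        · nlinarith
    _ = 2 * (D + 1) * (n:ℝ) ^ (e + 1) * supC E P := by
        rw [Real.rpow_add (by linarith) e 1, Real.rpow_one]; ring
    _ ≤ _ := by gcongr

lemma mStar_le {E : Set ℂ} (Phat : ℕ → Polynomial ℂ) (hdeg : ∀ n, (Phat n).natDegree = n)
    {s : ℝ} (hs : 0 < s) (h : Mk E 1 s) : mStarSeq E Phat ≤ s := by
  obtain ⟨M, hM, h⟩ := h
  have h' : ∀ P : Polynomial ℂ, 1 ≤ P.natDegree →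
      supC E (dIter 1 P) ≤ max M 1 * (P.natDegree : ℝ) ^ s * supC E P := by
    intro P hP
    have := supC_nonneg E P
    refine (h P hP).trans ?_
    gcongr
    exact le_max_left _ _
  have hM1 : 1 ≤ max M 1 := le_max_right _ _
  generalize max M 1 = L at h' hM1
  have hk : ∀ k : ℕ, 1 ≤ k → mkSeq E Phat k ≤ ((s * k : ℝ) : EReal) := by
    intro k hk
    have hk0 : (0:ℝ) < k := by exact_mod_cast hk
    have hlim : Tendsto (fun n : ℕ => (k * Real.log L / Real.log n + s * k : ℝ)) atTop
        (nhds (s * k)) := by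
      have : Tendsto (fun n : ℕ => Real.log (n:ℝ)) atTop atTop :=
        Real.tendsto_log_atTop.comp tendsto_natCast_atTop_atTop
      have := (this.const_div_atTop (k * Real.log L)).add_const (s * k)
      simpa using this
    have hlim' : Tendsto (fun n : ℕ => ((k * Real.log L / Real.log n + s * k : ℝ) : EReal)) atTop
        (nhds ((s * k : ℝ) : EReal)) := (continuous_coe_real_ereal.tendsto _).comp hlim
    rw [← hlim'.limsup_eq]
    refine limsup_le_limsup ?_
    filter_upwards [eventually_ge_atTop 2] with n hn
    have hn1 : (1:ℝ) < n := by exact_mod_cast hn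
    have hl := Real.log_pos hn1
    rw [EReal.coe_le_coe_iff, div_add' _ _ _ hl.ne']
    refine div_le_div_of_nonneg_right ?_ hl.le
    have hLn : Real.log ((L * (n:ℝ) ^ s) ^ k) = k * Real.log L + s * k * Real.log n := by
      rw [Real.log_pow, Real.log_mul (by positivity) (by positivity), Real.log_rpow (by linarith)]
      ring
    rw [← hLn]
    have hge : 1 ≤ L * (n:ℝ) ^ s := by
      have := Real.one_le_rpow hn1.le hs.le
      nlinarith
    have hr : supC E (dIter k (Phat n)) / supC E (Phat n) ≤ (L * (n:ℝ) ^ s) ^ k := by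
      have := Mk_iter hs hM1 h' k (Phat n) (by rw [hdeg]; omega)
      rw [hdeg] at this
      exact div_le_of_le_mul₀ (supC_nonneg _ _) (by positivity) this
    rcases (div_nonneg (supC_nonneg E (dIter k (Phat n))) (supC_nonneg E (Phat n))).eq_or_lt
      with h0 | h0
    · rw [← h0, Real.log_zero]
      exact Real.log_nonneg (one_le_pow₀ hge)
    · exact Real.log_le_log h0 hr
  refine limsup_le_of_le (by isBoundedDefault) ?_
  filter_upwards [eventually_ge_atTop 1] with k hk1
  have hk0 : (0:ℝ) < k := by exact_mod_cast hk1
  calc (((k : ℝ)⁻¹ : ℝ) : EReal) * mkSeq E Phat k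
      ≤ (((k : ℝ)⁻¹ : ℝ) : EReal) * ((s * k : ℝ) : EReal) := by
        apply mul_le_mul_of_nonneg_left (hk k hk1)
        exact_mod_cast (inv_pos.2 hk0).le
    _ = s := by
        rw [← EReal.coe_mul]
        congr 1; field_simp

end lemmas

/-- Let `E ⊂ ℂ` be compact, `μ` a Borel probability measure supported in
`E`, and `(P̂_n)` an orthonormal (in `L²(μ)`) sequence of polynomials with `deg P̂_n = n`
such that `limsup_n log‖P̂_n‖_E / log n = α < ∞`. Then `m(E) = m*(𝒫̂)` in `[0,∞]`. -/
theorem statement11 (E : Set ℂ) (hE : IsCompact E) (hne : E.Nonempty)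
    (μ : Measure ℂ) [IsProbabilityMeasure μ] (hsupp : μ Eᶜ = 0)
    (Phat : ℕ → Polynomial ℂ) (hdeg : ∀ n, (Phat n).natDegree = n)
    (horth : ∀ i j : ℕ,
      ∫ z, (Phat i).eval z * (starRingEnd ℂ) ((Phat j).eval z) ∂μ =
        if i = j then 1 else 0)
    (hα : Filter.atTop.limsup
        (fun n : ℕ => ((Real.log (supC E (Phat n)) / Real.log n : ℝ) : EReal)) < ⊤) :
    (mkPoly (supC E) 1 : EReal) = mStarSeq E Phat := by
  have hmain := fun (t : ℝ) (ht : 0 ≤ t) (hm : mStarSeq E Phat < t) (ε : ℝ) (hε : 0 < ε) =>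
    Mk_of_lt hE hne μ hsupp Phat hdeg horth hα ht hm hε
  have hnn : 0 ≤ mStarSeq E Phat := by
    by_contra! hc
    have := Mk_one_le hE hne (hmain 0 le_rfl (by simpa using hc) (1/2) (by norm_num))
    norm_num at this
  apply le_antisymm
  · rw [← EReal.le_of_forall_lt_iff_le]
    intro x hx
    obtain ⟨t, ht, htx⟩ := EReal.lt_iff_exists_real_btwn.1 hx
    have ht0 : 0 < t := by exact_mod_cast hnn.trans_lt ht
    have htx' : t < x := EReal.coe_lt_coe_iff.1 htx
    have hM := hmain t ht0.le ht (x - t) (by linarith)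
    rw [add_sub_cancel] at hM
    have : mkPoly (supC E) 1 ≤ ENNReal.ofReal x :=
      sInf_le ⟨x, ⟨by linarith, hM⟩, rfl⟩
    calc (mkPoly (supC E) 1 : EReal) ≤ (ENNReal.ofReal x : EReal) :=
          EReal.coe_ennreal_le_coe_ennreal_iff.2 this
      _ = x := by
        rw [EReal.coe_ennreal_ofReal, max_eq_left (by linarith)]
  · have h1 : (mStarSeq E Phat).toENNReal ≤ mkPoly (supC E) 1 := by
      refine le_sInf ?_
      rintro _ ⟨s, ⟨hs, hM⟩, rfl⟩
      have := EReal.toENNReal_le_toENNReal (mStar_le (E := E) Phat hdeg hs hM)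
      simpa using this
    rw [← EReal.coe_toENNReal hnn]
    exact EReal.coe_ennreal_le_coe_ennreal_iff.2 h1
end

section
/- Let E ⊂ ℂ^N be a nonempty compact set, μ a Borel probability measure with support contained in E, and (P_α)_{α∈ℕ^N} a family of polynomials, orthonormal in L²(μ), with deg P_α = |α| and such that for every n the family (P_α)_{|α|≤n} spans the space of polynomials of total degree ≤ n. Suppose there are B > 0 and β ≥ 0 with ‖P_α‖_E ≤ B · max(|α|,1)^β for all α. Then for every polynomial P with deg P = n ≥ 1, ‖P‖_E ≤ binom(n+N, N) · B · n^β · ‖P‖_{L²(μ)}. -/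
open MvPolynomial MeasureTheory

/-- The supremum norm `‖P‖_E = sup_{z ∈ E} |P(z)|` on polynomials in `N` variables. -/
noncomputable def supNorm {N : ℕ} (E : Set (Fin N → ℂ)) (P : MvPolynomial (Fin N) ℂ) : ℝ :=
  ⨆ z : E, ‖MvPolynomial.eval (z : Fin N → ℂ) P‖


theorem card_bound_aux {N : ℕ} (n : ℕ) (t : Finset (Fin N → ℕ)) (ht : ∀ α ∈ t, ∑ j, α j ≤ n) :
    t.card ≤ (n + N).choose N := by
  have h := Finset.card_finsuppAntidiag_nat_eq_choose (s := (Finset.univ : Finset (Fin (N+1)))) n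
  have e : ((Finset.univ : Finset (Fin (N+1))).card + n - 1).choose n = (n + N).choose N := by
    rw [Finset.card_univ, Fintype.card_fin]
    rw [show N + 1 + n - 1 = n + N by omega]
    exact Nat.choose_symm_add
  rw [← e, ← h]
  refine Finset.card_le_card_of_injOn
    (fun α => Finsupp.equivFunOnFinite.symm (Fin.cons (n - ∑ j, α j) α : Fin (N+1) → ℕ)) ?_ ?_
  · intro α hα
    have := ht α hα
    simp only [Finset.coe_sort_coe, Finset.mem_coe, Finset.mem_finsuppAntidiag]
    refine ⟨?_, Finset.subset_univ _⟩
    simp [Fin.sum_univ_succ]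
    omega
  · intro α _ γ _ hag
    have := Finsupp.equivFunOnFinite.symm.injective hag
    exact (Fin.cons_injective2 this).2

theorem integrable_aux {N : ℕ} {E : Set (Fin N → ℂ)} (hE : IsCompact E)
    (μ : Measure (Fin N → ℂ)) [IsProbabilityMeasure μ] (hsupp : μ Eᶜ = 0)
    (f : (Fin N → ℂ) → ℂ) (hf : Continuous f) : Integrable f μ := by
  have h : IntegrableOn f E μ := hf.continuousOn.integrableOn_compact hE
  rwa [IntegrableOn, Measure.restrict_eq_self_of_ae_mem] at h
  exact hsupp

theorem parseval_aux {N : ℕ} {E : Set (Fin N → ℂ)} (hE : IsCompact E)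
    (μ : Measure (Fin N → ℂ)) [IsProbabilityMeasure μ] (hsupp : μ Eᶜ = 0)
    (Pfam : (Fin N → ℕ) → MvPolynomial (Fin N) ℂ)
    (horth : ∀ α γ : Fin N → ℕ,
      ∫ z, MvPolynomial.eval z (Pfam α) * (starRingEnd ℂ) (MvPolynomial.eval z (Pfam γ)) ∂μ =
        if α = γ then 1 else 0)
    (t : Finset (Fin N → ℕ)) (c : (Fin N → ℕ) → ℂ) :
    ∫ z, ‖MvPolynomial.eval z (∑ α ∈ t, c α • Pfam α)‖ ^ 2 ∂μ = ∑ α ∈ t, ‖c α‖ ^ 2 := by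
  have hc : ∀ α, Continuous fun z => MvPolynomial.eval z (Pfam α) := fun α =>
    MvPolynomial.continuous_eval _
  have hi : ∀ α γ, Integrable (fun z => c α * (starRingEnd ℂ) (c γ) *
      (MvPolynomial.eval z (Pfam α) * (starRingEnd ℂ) (MvPolynomial.eval z (Pfam γ)))) μ := by
    intro α γ
    apply integrable_aux hE μ hsupp
    exact continuous_const.mul ((hc α).mul (Complex.continuous_conj.comp (hc γ)))
  apply Complex.ofReal_injective
  rw [← integral_complex_ofReal]
  have e : ∀ z, ((‖MvPolynomial.eval z (∑ α ∈ t, c α • Pfam α)‖ ^ 2 : ℝ) : ℂ) =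
      ∑ α ∈ t, ∑ γ ∈ t, c α * (starRingEnd ℂ) (c γ) *
      (MvPolynomial.eval z (Pfam α) * (starRingEnd ℂ) (MvPolynomial.eval z (Pfam γ))) := by
    intro z
    rw [Complex.ofReal_pow, ← Complex.mul_conj', map_sum, map_sum, Finset.sum_mul_sum]
    refine Finset.sum_congr rfl fun α _ => Finset.sum_congr rfl fun γ _ => ?_
    simp only [smul_eval, map_mul]
    ring
  simp_rw [e]
  rw [integral_finsetSum _ fun α _ => integrable_finsetSum _ fun γ _ => hi α γ]
  rw [Complex.ofReal_sum]
  refine Finset.sum_congr rfl fun α hα => ?_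
  rw [integral_finsetSum _ fun γ _ => hi α γ]
  simp_rw [integral_const_mul, horth]
  simp [hα, Complex.mul_conj']

/-- Let `E ⊂ ℂ^N` be nonempty compact, `μ` a Borel probability measure
supported in `E`, and `(P_α)` an orthonormal family in `L²(μ)` with `deg P_α = |α|` spanning
the polynomials of degree `≤ n` for every `n`. If `‖P_α‖_E ≤ B max(|α|,1)^β`, then every
polynomial `P` with `deg P = n ≥ 1` satisfies
`‖P‖_E ≤ binom(n+N, N) B n^β ‖P‖_{L²(μ)}`. -/
theorem statement13 {N : ℕ} (E : Set (Fin N → ℂ)) (hE : IsCompact E) (hne : E.Nonempty)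
    (μ : Measure (Fin N → ℂ)) [IsProbabilityMeasure μ] (hsupp : μ Eᶜ = 0)
    (Pfam : (Fin N → ℕ) → MvPolynomial (Fin N) ℂ)
    (hdeg : ∀ α : Fin N → ℕ, (Pfam α).totalDegree = ∑ j, α j)
    (horth : ∀ α γ : Fin N → ℕ,
      ∫ z, MvPolynomial.eval z (Pfam α) * (starRingEnd ℂ) (MvPolynomial.eval z (Pfam γ)) ∂μ =
        if α = γ then 1 else 0)
    (hspan : ∀ (n : ℕ) (Q : MvPolynomial (Fin N) ℂ), Q.totalDegree ≤ n →
      Q ∈ Submodule.span ℂ (Pfam '' {α : Fin N → ℕ | ∑ j, α j ≤ n}))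
    (B β : ℝ) (hB : 0 < B) (hβ : 0 ≤ β)
    (hbound : ∀ α : Fin N → ℕ,
      supNorm E (Pfam α) ≤ B * ((max (∑ j, α j) 1 : ℕ) : ℝ) ^ β) :
    ∀ n : ℕ, 1 ≤ n → ∀ P : MvPolynomial (Fin N) ℂ, P.totalDegree = n →
      supNorm E P ≤ ((n + N).choose N : ℝ) * B * (n : ℝ) ^ β *
        (∫ z, ‖MvPolynomial.eval z P‖ ^ 2 ∂μ) ^ ((1 : ℝ) / 2) := by
  intro n hn P hP
  obtain ⟨l, hl, hlP⟩ := (Finsupp.mem_span_image_iff_linearCombination ℂ).mp (hspan n P hP.le)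
  have hsum : P = ∑ α ∈ l.support, l α • Pfam α := by
    rw [← hlP, Finsupp.linearCombination_apply, Finsupp.sum]
  have hle : ∀ α ∈ l.support, ∑ j, α j ≤ n := fun α hα => hl hα
  have hcard := card_bound_aux n l.support hle
  have hpars : ∫ z, ‖MvPolynomial.eval z P‖ ^ 2 ∂μ = ∑ α ∈ l.support, ‖l α‖ ^ 2 := by
    rw [hsum]
    exact parseval_aux hE μ hsupp Pfam horth l.support l
  rw [hpars, ← Real.sqrt_eq_rpow]
  have hcoef : ∀ α ∈ l.support, ‖l α‖ ≤ Real.sqrt (∑ α ∈ l.support, ‖l α‖ ^ 2) := fun α hα =>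
    Real.le_sqrt_of_sq_le
      (Finset.single_le_sum (f := fun α => ‖l α‖ ^ 2) (fun _ _ => by positivity) hα)
  set S := Real.sqrt (∑ α ∈ l.support, ‖l α‖ ^ 2) with hS
  have hS0 : 0 ≤ S := Real.sqrt_nonneg _
  have hval : ∀ α ∈ l.support, ∀ z ∈ E, ‖MvPolynomial.eval z (Pfam α)‖ ≤ B * (n : ℝ) ^ β := by
    intro α hα z hz
    have hbdd : BddAbove (Set.range fun z : E => ‖MvPolynomial.eval (z : Fin N → ℂ) (Pfam α)‖) := by
      have := hE.bddAbove_image (f := fun z => ‖MvPolynomial.eval z (Pfam α)‖)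
        (MvPolynomial.continuous_eval _).norm.continuousOn
      rwa [Set.image_eq_range] at this
    refine (le_ciSup hbdd ⟨z, hz⟩).trans ((hbound α).trans ?_)
    have : max (∑ j, α j) 1 ≤ n := max_le (hle α hα) hn
    gcongr
  haveI : Nonempty E := hne.to_subtype
  refine ciSup_le fun z => ?_
  conv_lhs => rw [hsum, map_sum]
  refine (norm_sum_le _ _).trans ?_
  have hterm : ∀ α ∈ l.support, ‖MvPolynomial.eval (z : Fin N → ℂ) (l α • Pfam α)‖ ≤
      S * (B * (n : ℝ) ^ β) := by
    intro α hα
    rw [smul_eval, norm_mul]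
    exact mul_le_mul (hcoef α hα) (hval α hα z z.2) (norm_nonneg _) hS0
  refine (Finset.sum_le_card_nsmul _ _ _ hterm).trans ?_
  rw [nsmul_eq_mul]
  have : (l.support.card : ℝ) ≤ ((n + N).choose N : ℝ) := by exact_mod_cast hcard
  calc _ ≤ ((n + N).choose N : ℝ) * (S * (B * (n : ℝ) ^ β)) := by gcongr
    _ = _ := by ring
end

section
/- Let E ⊂ ℂ^N be a nonempty compact set, μ a Borel probability measure with support contained in E, and B₁ > 0, β₁ ≥ 0 constants such that ‖P‖_E ≤ B₁ (deg P)^{β₁} ‖P‖_{L²(μ)} for every polynomial P with deg P ≥ 1. Then for every real s ≥ 1 and every polynomial P with deg P ≥ 1, ‖P‖_E ≤ B₁^{2/s} · ⌈s⌉^{2β₁/s} · (deg P)^{2β₁/s} · ‖P‖_{L^s(μ)}, where ⌈s⌉ is the smallest integer ≥ s. In particular, each norm ‖P‖_{L^s(μ)} + ‖P‖_E (s ≥ 1) is E-admissible. -/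
open MvPolynomial MeasureTheory

/-- The `L^s(μ)` norm `(∫ |P|^s dμ)^{1/s}` of a polynomial, for a real exponent `s`. -/
noncomputable def lpNorm {N : ℕ} (μ : Measure (Fin N → ℂ)) (s : ℝ)
    (P : MvPolynomial (Fin N) ℂ) : ℝ :=
  (∫ z, ‖MvPolynomial.eval z P‖ ^ s ∂μ) ^ (1 / s)

lemma evn_cont {N : ℕ} (P : MvPolynomial (Fin N) ℂ) :
    Continuous (fun z : Fin N → ℂ => ‖MvPolynomial.eval z P‖) :=
  (MvPolynomial.continuous_eval P).norm

lemma le_supNorm {N : ℕ} (E : Set (Fin N → ℂ)) (hE : IsCompact E)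
    (P : MvPolynomial (Fin N) ℂ) (z : Fin N → ℂ) (hz : z ∈ E) :
    ‖MvPolynomial.eval z P‖ ≤ supNorm E P := by
  have hb := hE.bddAbove_image (evn_cont P).continuousOn
  refine le_ciSup (f := fun z : E => ‖MvPolynomial.eval (z : Fin N → ℂ) P‖) ?_ ⟨z, hz⟩
  refine hb.mono ?_
  rintro _ ⟨w, rfl⟩
  exact ⟨w, w.2, rfl⟩

lemma supNorm_attained {N : ℕ} (E : Set (Fin N → ℂ)) (hE : IsCompact E) (hne : E.Nonempty)
    (P : MvPolynomial (Fin N) ℂ) : ∃ z ∈ E, supNorm E P = ‖MvPolynomial.eval z P‖ := by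
  obtain ⟨z, hz, hmax⟩ := hE.exists_isMaxOn hne (evn_cont P).continuousOn
  refine ⟨z, hz, le_antisymm ?_ (le_supNorm E hE P z hz)⟩
  have : Nonempty E := hne.to_subtype
  exact ciSup_le fun w => hmax w.2

lemma evn_integrable {N : ℕ} (E : Set (Fin N → ℂ)) (hE : IsCompact E)
    (μ : Measure (Fin N → ℂ)) [IsProbabilityMeasure μ] (hsupp : μ Eᶜ = 0)
    (P : MvPolynomial (Fin N) ℂ) (s : ℝ) (hs : 0 ≤ s) :
    Integrable (fun z => ‖MvPolynomial.eval z P‖ ^ s) μ := by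
  have hae : ∀ᵐ z ∂μ, z ∈ E := hsupp
  refine Integrable.of_bound
    ((evn_cont P).rpow_const fun _ => Or.inr hs).aestronglyMeasurable (supNorm E P ^ s) ?_
  filter_upwards [hae] with z hz
  rw [Real.norm_of_nonneg (by positivity)]
  exact Real.rpow_le_rpow (norm_nonneg _) (le_supNorm E hE P z hz) hs

lemma lpNorm_le_supNorm {N : ℕ} (E : Set (Fin N → ℂ)) (hE : IsCompact E) (hne : E.Nonempty)
    (μ : Measure (Fin N → ℂ)) [IsProbabilityMeasure μ] (hsupp : μ Eᶜ = 0)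
    (P : MvPolynomial (Fin N) ℂ) (s : ℝ) (hs : 1 ≤ s) :
    lpNorm μ s P ≤ supNorm E P := by
  have hae : ∀ᵐ z ∂μ, z ∈ E := hsupp
  have hM : 0 ≤ supNorm E P := by
    obtain ⟨z, -, h⟩ := supNorm_attained E hE hne P
    rw [h]; positivity
  have h1 : ∫ z, ‖MvPolynomial.eval z P‖ ^ s ∂μ ≤ supNorm E P ^ s := by
    have := integral_mono_ae (evn_integrable E hE μ hsupp P s (by linarith))
      (integrable_const (supNorm E P ^ s)) (by
        filter_upwards [hae] with z hz
        exact Real.rpow_le_rpow (norm_nonneg _) (le_supNorm E hE P z hz) (by linarith))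
    simpa using this
  have h0 : 0 ≤ ∫ z, ‖MvPolynomial.eval z P‖ ^ s ∂μ :=
    integral_nonneg fun z => by positivity
  calc lpNorm μ s P ≤ (supNorm E P ^ s) ^ (1 / s) :=
        Real.rpow_le_rpow h0 h1 (by positivity)
    _ = supNorm E P := by
        rw [← Real.rpow_mul hM, mul_one_div_cancel (by linarith), Real.rpow_one]

lemma main_bound {N : ℕ} (E : Set (Fin N → ℂ)) (hE : IsCompact E) (hne : E.Nonempty)
    (μ : Measure (Fin N → ℂ)) [IsProbabilityMeasure μ] (hsupp : μ Eᶜ = 0)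
    (B₁ β₁ : ℝ) (hB₁ : 0 < B₁) 
    (hyp : ∀ P : MvPolynomial (Fin N) ℂ, 1 ≤ P.totalDegree →
      supNorm E P ≤ B₁ * (P.totalDegree : ℝ) ^ β₁ * lpNorm μ 2 P)
    (s : ℝ) (hs : 1 ≤ s) (P : MvPolynomial (Fin N) ℂ) (hP : 1 ≤ P.totalDegree) :
      supNorm E P ≤ B₁ ^ (2 / s) * ((⌈s⌉₊ : ℝ)) ^ (2 * β₁ / s) *
        (P.totalDegree : ℝ) ^ (2 * β₁ / s) * lpNorm μ s P := by
  have hae : ∀ᵐ z ∂μ, z ∈ E := hsupp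
  have hs0 : 0 < s := by linarith
  obtain ⟨z, hz, hMz⟩ := supNorm_attained E hE hne P
  have hM : 0 ≤ supNorm E P := by rw [hMz]; positivity
  have hI : 0 ≤ ∫ z, ‖MvPolynomial.eval z P‖ ^ s ∂μ :=
    integral_nonneg fun z => by positivity
  have hk : 1 ≤ ⌈s⌉₊ := Nat.one_le_ceil_iff.2 hs0
  have hks : s ≤ (⌈s⌉₊ : ℝ) := Nat.le_ceil s
  rcases hM.eq_or_lt with h0 | hMpos
  · rw [← h0]
    exact mul_nonneg (mul_nonneg (mul_nonneg (Real.rpow_nonneg hB₁.le _)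
      (Real.rpow_nonneg (Nat.cast_nonneg _) _)) (Real.rpow_nonneg (Nat.cast_nonneg _) _))
      (Real.rpow_nonneg hI _)
  generalize ⌈s⌉₊ = k at *
  have hP0 : P ≠ 0 := by rintro rfl; simp at hP
  have hdeg : (P ^ k).totalDegree = k * P.totalDegree := by
    clear hk hks
    induction k with
    | zero => simp
    | succ n ih =>
      rw [pow_succ, MvPolynomial.totalDegree_mul_of_isDomain (pow_ne_zero n hP0) hP0, ih]
      ring
  have h1 := hyp (P ^ k) (by rw [hdeg]; exact Nat.mul_pos hk hP)
  rw [hdeg] at h1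
  have h2 : supNorm E P ^ k ≤ supNorm E (P ^ k) := by
    rw [hMz, ← norm_pow, ← map_pow]
    exact le_supNorm E hE _ z hz
  generalize hMd : supNorm E P = M at *
  have hkk : (0:ℝ) < k := by exact_mod_cast hk
  have hd : (0:ℝ) < P.totalDegree := by exact_mod_cast hP
  have hJ : ∫ z, ‖MvPolynomial.eval z (P ^ k)‖ ^ (2:ℝ) ∂μ
      ≤ M ^ (2 * (k:ℝ) - s) * ∫ z, ‖MvPolynomial.eval z P‖ ^ s ∂μ := by
    rw [← integral_const_mul]
    refine integral_mono_ae (evn_integrable E hE μ hsupp (P ^ k) 2 (by norm_num))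
      ((evn_integrable E hE μ hsupp P s hs0.le).const_mul _) ?_
    filter_upwards [hae] with w hw
    have hw1 : ‖MvPolynomial.eval w P‖ ≤ M := hMd ▸ le_supNorm E hE P w hw
    have : ‖MvPolynomial.eval w (P ^ k)‖ ^ (2:ℝ)
        = ‖MvPolynomial.eval w P‖ ^ (2 * (k:ℝ) - s) * ‖MvPolynomial.eval w P‖ ^ s := by
      rw [← Real.rpow_add_of_nonneg (norm_nonneg _) (by linarith) hs0.le, map_pow, norm_pow,
        ← Real.rpow_natCast, ← Real.rpow_mul (norm_nonneg _)]
      congr 1; ring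
    simp only [this]
    exact mul_le_mul_of_nonneg_right
      (Real.rpow_le_rpow (norm_nonneg _) hw1 (by linarith)) (by positivity)
  have hJ0 : 0 ≤ ∫ z, ‖MvPolynomial.eval z (P ^ k)‖ ^ (2:ℝ) ∂μ :=
    integral_nonneg fun z => by positivity
  have h3 := h2.trans h1
  have h4 := pow_le_pow_left₀ (by positivity) h3 2
  have hlp : lpNorm μ 2 (P ^ k) ^ 2 = ∫ z, ‖MvPolynomial.eval z (P ^ k)‖ ^ (2:ℝ) ∂μ := by
    unfold _root_.lpNorm
    rw [← Real.rpow_natCast, ← Real.rpow_mul hJ0]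
    norm_num
  rw [mul_pow, hlp] at h4
  have h5 := h4.trans (mul_le_mul_of_nonneg_left hJ (by positivity))
  have h6 : (M ^ k) ^ 2 = M ^ (2 * (k:ℝ) - s) * M ^ s := by
    rw [← Real.rpow_add hMpos, ← pow_mul, ← Real.rpow_natCast]
    congr 1; push_cast; ring
  rw [h6, mul_left_comm] at h5
  have h7 := le_of_mul_le_mul_left h5 (by positivity)
  have h8 := Real.rpow_le_rpow (by positivity) h7 (show 0 ≤ 1 / s by positivity)
  rw [← Real.rpow_mul hM, mul_one_div_cancel hs0.ne', Real.rpow_one,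
    Real.mul_rpow (by positivity) hI] at h8
  refine h8.trans (le_of_eq ?_)
  unfold _root_.lpNorm
  congr 1
  push_cast
  rw [← Real.rpow_natCast, ← Real.rpow_mul (by positivity), Real.mul_rpow hB₁.le (by positivity),
    ← Real.rpow_mul (by positivity), Real.mul_rpow hkk.le hd.le, ← mul_assoc]
  have e1 : ((2:ℕ):ℝ) * (1 / s) = 2 / s := by push_cast; ring
  have e2 : β₁ * (((2:ℕ):ℝ) * (1 / s)) = 2 * β₁ / s := by push_cast; ring
  rw [e2, e1]

/-- Let `E ⊂ ℂ^N` be nonempty compact and `μ` a Borel probability measure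
supported in `E` with `‖P‖_E ≤ B₁ (deg P)^{β₁} ‖P‖_{L²(μ)}` for all `P` with `deg P ≥ 1`.
Then for every real `s ≥ 1` and every such `P`,
`‖P‖_E ≤ B₁^{2/s} ⌈s⌉^{2β₁/s} (deg P)^{2β₁/s} ‖P‖_{L^s(μ)}`; in particular each norm
`‖P‖_{L^s(μ)} + ‖P‖_E` (`s ≥ 1`) is `E`-admissible. -/
theorem statement14 {N : ℕ} (E : Set (Fin N → ℂ)) (hE : IsCompact E) (hne : E.Nonempty)
    (μ : Measure (Fin N → ℂ)) [IsProbabilityMeasure μ] (hsupp : μ Eᶜ = 0)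
    (B₁ β₁ : ℝ) (hB₁ : 0 < B₁) (hβ₁ : 0 ≤ β₁)
    (hyp : ∀ P : MvPolynomial (Fin N) ℂ, 1 ≤ P.totalDegree →
      supNorm E P ≤ B₁ * (P.totalDegree : ℝ) ^ β₁ * lpNorm μ 2 P) :
    (∀ s : ℝ, 1 ≤ s → ∀ P : MvPolynomial (Fin N) ℂ, 1 ≤ P.totalDegree →
      supNorm E P ≤ B₁ ^ (2 / s) * ((⌈s⌉₊ : ℝ)) ^ (2 * β₁ / s) *
        (P.totalDegree : ℝ) ^ (2 * β₁ / s) * lpNorm μ s P) ∧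
    ∀ s : ℝ, 1 ≤ s → ∃ A B a b : ℝ, 0 < A ∧ 0 < B ∧ 0 ≤ a ∧ 0 ≤ b ∧
      ∀ P : MvPolynomial (Fin N) ℂ, 1 ≤ P.totalDegree →
        supNorm E P ≤ A * (P.totalDegree : ℝ) ^ a * (lpNorm μ s P + supNorm E P) ∧
        lpNorm μ s P + supNorm E P ≤ B * (P.totalDegree : ℝ) ^ b * supNorm E P := by
  refine ⟨fun s hs P hP => main_bound E hE hne μ hsupp B₁ β₁ hB₁ hyp s hs P hP, ?_⟩
  intro s hs
  refine ⟨1, 2, 0, 0, by norm_num, by norm_num, le_rfl, le_rfl, fun P _ => ?_⟩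
  have h1 := lpNorm_le_supNorm E hE hne μ hsupp P s hs
  have h0 : 0 ≤ lpNorm μ s P :=
    Real.rpow_nonneg (integral_nonneg fun z => by positivity) _
  simp only [Real.rpow_zero]
  constructor <;> linarith
end
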